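/- Let m ≥ 0 be an integer. There is a constant C_m > 0 (one may take C_m = Γ(4m+2)/(2^{4m+4} π (2m+1))) such that for every F ∈ H²(T_{Λ₃}), the restriction R□^m F : Π⁺ → ℂ, z₁ ↦ (□^m F)(z₁, 0, 0), belongs to the weighted Bergman space A²_{4m+1}(Π⁺) and ‖R□^m F‖²_{A²_{4m+1}(Π⁺)} ≤ C_m ‖F‖²_{H²(T_{Λ₃})}. -/

import Mathlib

open MeasureTheory Set
open scoped ENNReal NNReal

noncomputable section

/-- The Lorentz cone `Λ₃ = {y ∈ ℝ³ : y₁ + y₂ > 0, y₁² − y₂² − y₃² > 0}`. -/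
def Lambda3 : Set (Fin 3 → ℝ) :=
  {y | 0 < y 0 + y 1 ∧ 0 < (y 0) ^ 2 - (y 1) ^ 2 - (y 2) ^ 2}

/-- The tube domain `T_{Λ₃} = ℝ³ + iΛ₃ ⊂ ℂ³`. -/
def TLambda3 : Set (Fin 3 → ℂ) :=
  {z | (fun i => (z i).im) ∈ Lambda3}

/-- The determinant function of the Lorentz cone: `Δ(y) = y₁² − y₂² − y₃²`. -/
def DeltaL (y : Fin 3 → ℝ) : ℝ := (y 0) ^ 2 - (y 1) ^ 2 - (y 2) ^ 2

/-- Square of the Hardy space `H²(T_{Λ₃})` norm. -/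
def hardyNormSq (F : (Fin 3 → ℂ) → ℂ) : ℝ≥0∞ :=
  ⨆ y ∈ Lambda3,
    ∫⁻ x : Fin 3 → ℝ, (‖F (fun i => (x i : ℂ) + (y i : ℂ) * Complex.I)‖₊ : ℝ≥0∞) ^ 2

/-- Square of the weighted Bergman space `A²_ν(T_{Λ₃})` norm:
`‖G‖² = ∫_{Λ₃} ∫_{ℝ³} |G(x+iy)|² Δ(y)^{ν−3/2} dx dy`. -/
def bergNormSqTube (ν : ℝ) (G : (Fin 3 → ℂ) → ℂ) : ℝ≥0∞ :=
  ∫⁻ y in Lambda3,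
    (∫⁻ x : Fin 3 → ℝ, (‖G (fun i => (x i : ℂ) + (y i : ℂ) * Complex.I)‖₊ : ℝ≥0∞) ^ 2)
      * ENNReal.ofReal (DeltaL y ^ (ν - 3 / 2))

/-- Partial derivative in the `i`-th complex coordinate. -/
def pd (i : Fin 3) (F : (Fin 3 → ℂ) → ℂ) : (Fin 3 → ℂ) → ℂ :=
  fun z => fderiv ℂ F z (Pi.single i 1)

/-- The box operator `□ = −∂²/∂z₁² + ∂²/∂z₂² + ∂²/∂z₃²` associated to the Lorentz cone. -/
def Box (F : (Fin 3 → ℂ) → ℂ) : (Fin 3 → ℂ) → ℂ :=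
  fun z => - pd 0 (pd 0 F) z + pd 1 (pd 1 F) z + pd 2 (pd 2 F) z


/-- The upper half-plane `Π⁺`. -/
def UHP : Set ℂ := {z : ℂ | 0 < z.im}

/-- The weighted measure `dV_α(x+iy) = y^α dx dy` on the upper half-plane. -/
def Vm (α : ℝ) : Measure ℂ :=
  (volume.restrict UHP).withDensity fun z => ENNReal.ofReal (z.im ^ α)

/-- Square of the weighted Bergman space `A²_α(Π⁺)` norm:
`‖G‖² = ∫_{Π⁺} |G(x+iy)|² y^α dx dy`. -/
def bergNormSqUHP (α : ℝ) (G : ℂ → ℂ) : ℝ≥0∞ :=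
  ∫⁻ z, (‖G z‖₊ : ℝ≥0∞) ^ 2 ∂(Vm α)


section FourierPart
open FourierTransform SchwartzMap
variable {E : Type*} [NormedAddCommGroup E] [InnerProductSpace ℝ E] [FiniteDimensional ℝ E]
  [MeasurableSpace E] [BorelSpace E]

theorem aux_pair_fourier (f : Lp (α := E) ℂ 2 volume) (ψ : 𝓢(E, ℂ)) :
    ∫ ξ, ψ ξ • (𝓕 f : Lp (α := E) ℂ 2 volume) ξ = ∫ x, 𝓕 (ψ : E → ℂ) x • f x := by
  have h := congrArg (fun T => T ψ) (Lp.fourier_toTemperedDistribution_eq f)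
  simp only [TemperedDistribution.fourier_apply, Lp.toTemperedDistribution_apply] at h
  rw [← h, SchwartzMap.fourier_coe]

theorem aux_pair_fourierInv (f : Lp (α := E) ℂ 2 volume) (ψ : 𝓢(E, ℂ)) :
    ∫ ξ, ψ ξ • (𝓕⁻ f : Lp (α := E) ℂ 2 volume) ξ = ∫ x, 𝓕⁻ (ψ : E → ℂ) x • f x := by
  have h := congrArg (fun T => T ψ) (Lp.fourierInv_toTemperedDistribution_eq f)
  simp only [TemperedDistribution.fourierInv_apply, Lp.toTemperedDistribution_apply] at h
  rw [← h, SchwartzMap.fourierInv_coe]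

theorem aux_fourierInv_continuous (f : E → ℂ) (h1 : Integrable f) :
    Continuous (𝓕⁻ f : E → ℂ) := 
  VectorFourier.fourierIntegral_continuous Real.continuous_fourierChar
    (by exact (innerSL ℝ (E := E)).continuous₂.neg) h1

theorem aux_fourierInv_ae (f : E → ℂ) (h1 : Integrable f) (h2 : MemLp f 2) :
    (𝓕⁻ (h2.toLp f) : Lp (α := E) ℂ 2 volume) =ᵐ[volume] (𝓕⁻ f : E → ℂ) := by
  apply ae_eq_of_integral_contDiff_smul_eq
  · exact (Lp.memLp _).locallyIntegrable (by norm_num)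
  · exact (aux_fourierInv_continuous f h1).locallyIntegrable
  · intro g g_smooth g_cpt
    have hg₁ : HasCompactSupport (Complex.ofRealCLM ∘ g) := g_cpt.comp_left rfl
    have hg₂ : ContDiff ℝ (⊤ : ℕ∞) (Complex.ofRealCLM ∘ g) := by fun_prop
    have key := aux_pair_fourierInv (h2.toLp f) (hg₁.toSchwartzMap hg₂)
    have e1 : ∀ x, (hg₁.toSchwartzMap hg₂) x = (g x : ℂ) := fun x => rfl
    have hgi : Integrable (hg₁.toSchwartzMap hg₂ : E → ℂ) := SchwartzMap.integrable _
    have k2 := VectorFourier.integral_fourierIntegral_smul_eq_flip (L := -innerₗ E) (μ := volume)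
      (ν := volume) (f := (hg₁.toSchwartzMap hg₂ : E → ℂ)) (g := f) Real.continuous_fourierChar
      (by exact (innerSL ℝ (E := E)).continuous₂.neg) hgi h1
    have k3 : ∫ x, 𝓕⁻ ((hg₁.toSchwartzMap hg₂) : E → ℂ) x • (h2.toLp f) x
       = ∫ x, 𝓕⁻ ((hg₁.toSchwartzMap hg₂) : E → ℂ) x • f x := by
      apply integral_congr_ae
      filter_upwards [h2.coeFn_toLp] with x hx
      rw [hx]
    rw [k3] at key
    have hfl : (-innerₗ E).flip = -innerₗ E := by
      ext x y; simp [real_inner_comm]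
    rw [hfl] at k2
    simp only [e1] at key
    have k4 : ∀ x, (g x) • (𝓕⁻ f) x = (g x : ℂ) • (𝓕⁻ f) x := fun x => by simp
    have k5 : ∀ x, (g x) • (𝓕⁻ (h2.toLp f) : Lp (α := E) ℂ 2 volume) x = (g x : ℂ) • (𝓕⁻ (h2.toLp f) : Lp (α := E) ℂ 2 volume) x := fun x => by simp
    simp only [k4, k5]
    rw [key]
    exact k2

theorem aux_lintegral_sq (f : E → ℂ) : ∫⁻ x, ‖f x‖ₑ ^ 2 = eLpNorm f 2 volume ^ 2 := by
  have := eLpNorm_nnreal_pow_eq_lintegral (f := f) (μ := (volume : Measure E)) (p := 2) (by norm_num)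
  simpa using this.symm

theorem aux_memLp_two (f : E → ℂ) (hf : AEStronglyMeasurable f volume)
    (h : ∫⁻ x, ‖f x‖ₑ ^ 2 < ⊤) : MemLp f 2 volume := by
  refine ⟨hf, ?_⟩
  rw [aux_lintegral_sq] at h
  by_contra hc
  simp only [not_lt, top_le_iff] at hc
  rw [hc] at h
  simp at h

theorem aux_eLpNorm_fourier (f : Lp (α := E) ℂ 2 volume) :
    eLpNorm (𝓕 f : Lp (α := E) ℂ 2 volume) 2 volume = eLpNorm f 2 volume := by
  have := Lp.norm_fourier_eq f
  rw [Lp.norm_def, Lp.norm_def] at this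
  rwa [ENNReal.toReal_eq_toReal_iff' (Lp.eLpNorm_ne_top _) (Lp.eLpNorm_ne_top _)] at this

theorem aux_eLpNorm_fourierInv (f : Lp (α := E) ℂ 2 volume) :
    eLpNorm (𝓕⁻ f : Lp (α := E) ℂ 2 volume) 2 volume = eLpNorm f 2 volume := by
  have := aux_eLpNorm_fourier (𝓕⁻ f : Lp (α := E) ℂ 2 volume)
  rw [← this]
  congr 2
  simp

theorem aux_plancherelInv (f : E → ℂ) (h1 : Integrable f) (h2 : MemLp f 2) :
    ∫⁻ x, ‖(𝓕⁻ f : E → ℂ) x‖ₑ ^ 2 = ∫⁻ x, ‖f x‖ₑ ^ 2 := by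
  rw [aux_lintegral_sq, aux_lintegral_sq, ← eLpNorm_congr_ae (aux_fourierInv_ae f h1 h2),
    aux_eLpNorm_fourierInv, eLpNorm_congr_ae h2.coeFn_toLp]

theorem aux_schwartz_plancherel (ψ : 𝓢(E, ℂ)) :
    ∫⁻ x, ‖𝓕 (ψ : E → ℂ) x‖ₑ ^ 2 = ∫⁻ x, ‖ψ x‖ₑ ^ 2 := by
  rw [aux_lintegral_sq, aux_lintegral_sq]
  have h := aux_eLpNorm_fourier (ψ.toLp 2)
  rw [SchwartzMap.toLp_fourier_eq, eLpNorm_congr_ae (SchwartzMap.coeFn_toLp _ _ _),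
    eLpNorm_congr_ae (SchwartzMap.coeFn_toLp _ _ _)] at h
  rw [← h, SchwartzMap.fourier_coe]

end FourierPart


/-- The point `x + i y` of `ℂ³`. -/
def tpt (x y : Fin 3 → ℝ) : Fin 3 → ℂ := fun i => (x i : ℂ) + (y i : ℂ) * Complex.I

theorem tpt_im (x y : Fin 3 → ℝ) : (fun i => (tpt x y i).im) = y := by
  funext i; simp [tpt]

theorem tpt_mem {x y : Fin 3 → ℝ} (hy : y ∈ Lambda3) : tpt x y ∈ TLambda3 := by
  show (fun i => (tpt x y i).im) ∈ Lambda3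
  rw [tpt_im]; exact hy

theorem isOpen_Lambda3 : IsOpen Lambda3 := by
  have h1 : IsOpen {y : Fin 3 → ℝ | 0 < y 0 + y 1} := isOpen_lt continuous_const (by fun_prop)
  have h2 : IsOpen {y : Fin 3 → ℝ | 0 < (y 0) ^ 2 - (y 1) ^ 2 - (y 2) ^ 2} :=
    isOpen_lt continuous_const (by fun_prop)
  exact h1.inter h2

theorem isOpen_TLambda3 : IsOpen TLambda3 := by
  apply isOpen_Lambda3.preimage (f := fun z : Fin 3 → ℂ => fun i => (z i).im)
  fun_prop

theorem Lambda3_iff (y : Fin 3 → ℝ) : y ∈ Lambda3 ↔ 0 < y 0 ∧ (y 1)^2 + (y 2)^2 < (y 0)^2 := by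
  constructor
  · rintro ⟨h1, h2⟩
    refine ⟨?_, by linarith⟩
    have h3 : |y 1| < |y 0| := by
      apply sq_lt_sq.1; nlinarith [sq_nonneg (y 2)]
    by_contra hc
    push Not at hc
    rw [abs_of_nonpos hc] at h3
    have := (abs_lt.1 h3)
    linarith
  · rintro ⟨h1, h2⟩
    have h3 : |y 1| < |y 0| := by
      apply sq_lt_sq.1; nlinarith [sq_nonneg (y 2)]
    rw [abs_of_pos h1] at h3
    have := (abs_lt.1 h3)
    exact ⟨by linarith, by linarith⟩

theorem Lambda3_smul {y : Fin 3 → ℝ} (hy : y ∈ Lambda3) {c : ℝ} (hc : 0 < c) : c • y ∈ Lambda3 := by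
  rw [Lambda3_iff] at *
  simp only [Pi.smul_apply, smul_eq_mul, mul_pow]
  refine ⟨mul_pos hc hy.1, ?_⟩
  rw [← mul_add]
  exact mul_lt_mul_of_pos_left hy.2 (by positivity)

theorem Lambda3_add {y y' : Fin 3 → ℝ} (hy : y ∈ Lambda3) (hy' : y' ∈ Lambda3) : y + y' ∈ Lambda3 := by
  rw [Lambda3_iff] at *
  obtain ⟨a, b⟩ := hy
  obtain ⟨a', b'⟩ := hy'
  simp only [Pi.add_apply]
  refine ⟨by linarith, ?_⟩
  have h : y 1 * y' 1 + y 2 * y' 2 < y 0 * y' 0 := by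
    apply lt_of_pow_lt_pow_left₀ 2 (by positivity)
    calc _ ≤ ((y 1)^2 + (y 2)^2) * ((y' 1)^2 + (y' 2)^2) := by nlinarith [sq_nonneg (y 1 * y' 2 - y 2 * y' 1)]
      _ < (y 0)^2 * (y' 0)^2 := by
        apply mul_lt_mul'' b b' (by positivity) (by positivity)
      _ = _ := by ring
  nlinarith

theorem Lambda3_convex : Convex ℝ Lambda3 := by
  apply (convex_iff_forall_pos).2
  intro x hx y hy a b ha hb _
  exact Lambda3_add (Lambda3_smul hx ha) (Lambda3_smul hy hb)

theorem tpt_continuous : Continuous (fun p : (Fin 3 → ℝ) × (Fin 3 → ℝ) => tpt p.1 p.2) := by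
  unfold tpt; fun_prop

/-- The point `x + i y + w v`. -/
def emw (x y v : Fin 3 → ℝ) (w : ℂ) : Fin 3 → ℂ := fun i => (x i : ℂ) + (y i : ℂ) * Complex.I + w * v i

theorem emw_eq (x y v : Fin 3 → ℝ) (w : ℂ) : emw x y v w = tpt (x + w.re • v) (y + w.im • v) := by
  funext i
  simp only [emw, tpt, Pi.add_apply, Pi.smul_apply, smul_eq_mul]
  conv_lhs => rw [← Complex.re_add_im w]
  push_cast
  ring

set_option maxHeartbeats 1000000 in
theorem shift_local (H : (Fin 3 → ℂ) → ℂ) (hH : DifferentiableOn ℂ H TLambda3)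
    (hN : ∀ R : ℝ, ∃ N : ℝ≥0, ∀ y ∈ Lambda3, ‖y‖ ≤ R → ∫⁻ x, ‖H (tpt x y)‖ₑ ≤ N)
    (y v : Fin 3 → ℝ) (hy : y ∈ Lambda3) :
    HasDerivAt (fun s : ℝ => ∫ x, H (tpt x (y + s • v))) 0 0 := by
  have hHc := hH.continuousOn
  obtain ⟨ρ, hρ, hρ'⟩ : ∃ ρ > 0, ∀ t : ℝ, |t| < ρ → y + t • v ∈ Lambda3 := by
    have : IsOpen ((fun t : ℝ => y + t • v) ⁻¹' Lambda3) := isOpen_Lambda3.preimage (by fun_prop)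
    obtain ⟨ρ, hρ, h⟩ := Metric.isOpen_iff.1 this 0 (by simpa using hy)
    refine ⟨ρ, hρ, fun t ht => h (by simpa using ht)⟩
  set r := ρ / 3 with hr
  have hr0 : 0 < r := by positivity
  have hmem : ∀ x : Fin 3 → ℝ, ∀ w : ℂ, ‖w‖ ≤ 2 * r → emw x y v w ∈ TLambda3 := by
    intro x w hw
    rw [emw_eq]
    apply tpt_mem
    apply hρ'
    have := Complex.abs_im_le_norm w
    linarith
  -- integrability on slices
  obtain ⟨N, hN'⟩ := hN (‖y‖ + 2 * r * ‖v‖)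
  have hslice : ∀ w : ℂ, ‖w‖ ≤ 2 * r → ∫⁻ x, ‖H (emw x y v w)‖ₑ ≤ N := by
    intro w hw
    have := Complex.abs_im_le_norm w
    simp only [emw_eq]
    rw [lintegral_add_right_eq_self (fun x => ‖H (tpt x (y + w.im • v))‖ₑ) (w.re • v)]
    apply hN'
    · apply hρ'; linarith
    · refine (norm_add_le _ _).trans ?_
      rw [norm_smul]
      gcongr
      exact this.trans hw
  have hcont : ∀ w : ℂ, ‖w‖ ≤ 2 * r → Continuous (fun x => H (emw x y v w)) := by
    intro w hw
    apply hHc.comp_continuous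
    · unfold emw; fun_prop
    · intro x; exact hmem x w hw
  have hdiff : ∀ x, ∀ w : ℂ, ‖w‖ ≤ 2 * r → DifferentiableAt ℂ (fun w => H (emw x y v w)) w := by
    intro x w hw
    have h1 := hH.differentiableAt (isOpen_TLambda3.mem_nhds (hmem x w hw))
    apply DifferentiableAt.comp w h1
    unfold emw
    fun_prop
  set B : (Fin 3 → ℝ) → ℝ := fun x => ∫ θ in Ioc (0:ℝ) (2 * Real.pi), (1 / (Real.pi * r)) * ‖H (emw x y v (circleMap 0 (2*r) θ))‖ with hB
  have hcm : ∀ θ, ‖circleMap 0 (2*r) θ‖ ≤ 2 * r := by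
    intro θ; simp [abs_of_pos hr0]
  have hint2 : Integrable (fun p : (Fin 3 → ℝ) × ℝ => (1 / (Real.pi * r)) * ‖H (emw p.1 y v (circleMap 0 (2*r) p.2))‖)
      (volume.prod (volume.restrict (Ioc (0:ℝ) (2 * Real.pi)))) := by
    apply Integrable.const_mul
    apply Integrable.norm
    have hc : Continuous (fun p : (Fin 3 → ℝ) × ℝ => H (emw p.1 y v (circleMap 0 (2*r) p.2))) := by
      apply hHc.comp_continuous
      · unfold emw circleMap; fun_prop
      · intro p; exact hmem _ _ (hcm _)
    refine ⟨hc.aestronglyMeasurable, ?_⟩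
    rw [HasFiniteIntegral, lintegral_prod_symm _ hc.aestronglyMeasurable.enorm]
    calc _ ≤ ∫⁻ θ in Ioc (0:ℝ) (2 * Real.pi), (N : ℝ≥0∞) := by
            apply lintegral_mono
            intro θ
            exact hslice _ (hcm θ)
      _ < ⊤ := by
            simp [ENNReal.mul_lt_top_iff]
  have hBint : Integrable B := hint2.integral_prod_left
  have hcircle : ∀ x, ∀ w ∈ Metric.ball (0:ℂ) r, ‖deriv (fun w => H (emw x y v w)) w‖ ≤ B x := by
    intro x w hw
    have hw' : ‖w‖ < r := by simpa using hw
    have hfd : DifferentiableOn ℂ (fun w => H (emw x y v w)) (Metric.closedBall 0 (2*r)) := by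
      intro u hu
      exact (hdiff x u (by simpa using hu)).differentiableWithinAt
    have hcf := Complex.two_pi_I_inv_smul_circleIntegral_sub_sq_inv_smul_of_differentiable
      (U := Metric.ball 0 ρ) (c := 0) (R := 2*r) (w₀ := w) (f := fun w => H (emw x y v w)) Metric.isOpen_ball
      (Metric.closedBall_subset_ball (by linarith)) (by
        intro u hu
        have hu' : ‖u‖ < ρ := by simpa using hu
        have h1 := hH.differentiableAt (isOpen_TLambda3.mem_nhds (show emw x y v u ∈ TLambda3 by
          rw [emw_eq]; apply tpt_mem; apply hρ'
          exact (Complex.abs_im_le_norm u).trans_lt hu'))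
        apply DifferentiableAt.differentiableWithinAt
        apply DifferentiableAt.comp u h1
        unfold emw
        fun_prop) (by simp; linarith)
    rw [← hcf, norm_smul, circleIntegral, intervalIntegral.integral_of_le (by positivity)]
    have h2 : ‖∫ θ in Ioc (0:ℝ) (2 * Real.pi), deriv (circleMap 0 (2*r)) θ • ((circleMap 0 (2*r) θ - w)^2)⁻¹ • H (emw x y v (circleMap 0 (2*r) θ))‖
       ≤ ∫ θ in Ioc (0:ℝ) (2 * Real.pi), (2 / r) * ‖H (emw x y v (circleMap 0 (2*r) θ))‖ := by
      have hc : Continuous (fun θ : ℝ => H (emw x y v (circleMap 0 (2*r) θ))) := by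
        apply hHc.comp_continuous
        · unfold emw circleMap; fun_prop
        · intro p; exact hmem _ _ (hcm _)
      apply norm_integral_le_of_norm_le
      · exact ((continuous_const.mul hc.norm).integrableOn_Icc).mono_set Ioc_subset_Icc_self
      · refine Filter.Eventually.of_forall fun θ => ?_
        simp only [norm_smul, norm_inv, norm_pow, deriv_circleMap]
        rw [← mul_assoc]
        apply mul_le_mul_of_nonneg_right _ (norm_nonneg _)
        have h3 : r ≤ ‖circleMap 0 (2*r) θ - w‖ := by
          have := norm_sub_norm_le (circleMap 0 (2*r) θ) w
          have h4 : ‖circleMap 0 (2*r) θ‖ = 2 * r := by simp [abs_of_pos hr0]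
          linarith
        simp only [norm_mul, Complex.norm_I, mul_one, norm_circleMap_zero, abs_mul, abs_two, abs_of_pos hr0]
        calc 2 * r * (‖circleMap 0 (2*r) θ - w‖^2)⁻¹ ≤ 2 * r * (r^2)⁻¹ := by gcongr
          _ = 2 / r := by field_simp
    refine (mul_le_mul_of_nonneg_left h2 (norm_nonneg _)).trans (le_of_eq ?_)
    rw [hB]
    simp only
    rw [integral_const_mul, integral_const_mul, ← mul_assoc]
    congr 1
    simp only [norm_inv, norm_mul, Complex.norm_I, Complex.norm_real, Complex.norm_ofNat, mul_one, Real.norm_eq_abs, abs_of_pos Real.pi_pos]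
    field_simp
  have hJ := (hasDerivAt_integral_of_dominated_loc_of_deriv_le (μ := (volume : Measure (Fin 3 → ℝ))) (s := Metric.ball (0:ℂ) r) (x₀ := (0:ℂ))
    (F := fun w x => H (emw x y v w)) (F' := fun w x => deriv (fun w => H (emw x y v w)) w)
    (bound := B) (Metric.ball_mem_nhds _ hr0) (by
      filter_upwards [Metric.ball_mem_nhds (0:ℂ) hr0] with w hw
      have hw' : ‖w‖ < r := by simpa using hw
      exact (hcont w (by linarith)).aestronglyMeasurable)
    ⟨(hcont 0 (by simp; positivity)).aestronglyMeasurable, (hslice 0 (by simp; positivity)).trans_lt ENNReal.coe_lt_top⟩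
    (by
      have hlim : ∀ x, Filter.Tendsto (fun n : ℕ => (((r / (n+1) : ℝ) : ℂ))⁻¹ • (H (emw x y v (0 + ((r / (n+1) : ℝ) : ℂ))) - H (emw x y v 0))) Filter.atTop
          (nhds (deriv (fun w => H (emw x y v w)) 0)) := by
        intro x
        have h1 := (hdiff x 0 (by simp; positivity)).hasDerivAt.tendsto_slope_zero
        refine h1.comp (tendsto_nhdsWithin_iff.2 ⟨?_, ?_⟩)
        · have : Filter.Tendsto (fun n : ℕ => r / ((n:ℝ)+1)) Filter.atTop (nhds 0) := 
            tendsto_const_nhds.div_atTop (Filter.tendsto_atTop_add_const_right _ _ tendsto_natCast_atTop_atTop)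
          exact_mod_cast (Complex.continuous_ofReal.tendsto 0).comp this
        · refine Filter.Eventually.of_forall fun n => ?_
          simp only [mem_compl_iff, mem_singleton_iff, Complex.ofReal_eq_zero]
          positivity
      refine aestronglyMeasurable_of_tendsto_ae Filter.atTop (fun n => ?_) (Filter.Eventually.of_forall hlim)
      apply Continuous.aestronglyMeasurable
      have hle : ‖(0 + ((r / ((n:ℝ)+1) : ℝ) : ℂ))‖ ≤ 2 * r := by
        rw [zero_add, Complex.norm_real, Real.norm_of_nonneg (by positivity)]
        calc r / ((n:ℝ)+1) ≤ r / 1 := by gcongr; linarith [(Nat.cast_nonneg n : (0:ℝ) ≤ n)]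
          _ ≤ 2 * r := by linarith
      exact ((hcont _ hle).sub (hcont 0 (by simp; positivity))).const_smul ((((r / ((n:ℝ)+1) : ℝ) : ℂ))⁻¹))
    (Filter.Eventually.of_forall fun x w hw => hcircle x w hw) hBint
    (Filter.Eventually.of_forall fun x w hw => (hdiff x w (by
      have hw' : ‖w‖ < r := by simpa using hw
      linarith)).hasDerivAt)).2
  set d := ∫ x, deriv (fun w => H (emw x y v w)) 0 with hd
  -- real translations
  have hreal : ∀ t : ℝ, ∫ x, H (emw x y v (t:ℂ)) = ∫ x, H (emw x y v 0) := by
    intro t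
    simp only [emw_eq]
    simp only [Complex.ofReal_re, Complex.ofReal_im, Complex.zero_re, Complex.zero_im, zero_smul, add_zero]
    exact integral_add_right_eq_self (fun x => H (tpt x y)) (t • v)
  have hd0 : d = 0 := by
    have h1 : HasDerivAt (fun t : ℝ => ∫ x, H (emw x y v (t:ℂ))) d 0 := by
      have := HasDerivAt.comp_ofReal (z := 0) (e := fun w => ∫ x, H (emw x y v w)) (e' := d) (by simpa using hJ)
      exact this
    simp only [hreal] at h1
    exact h1.unique (hasDerivAt_const _ _)
  rw [hd0] at hJ
  have hI : HasDerivAt (fun s : ℝ => ∫ x, H (emw x y v ((s:ℂ) * Complex.I))) 0 0 := by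
    have h2 : HasDerivAt (fun w : ℂ => w * Complex.I) (Complex.I) ((0:ℝ):ℂ) := by
      simpa using (hasDerivAt_id ((0:ℝ):ℂ)).mul_const Complex.I
    have h3 : HasDerivAt (fun w => ∫ x, H (emw x y v w)) 0 (((0:ℝ):ℂ) * Complex.I) := by simpa using hJ
    have := (HasDerivAt.comp ((0:ℝ):ℂ) h3 h2).comp_ofReal
    simpa using this
  refine hI.congr_of_eventuallyEq (Filter.Eventually.of_forall fun s => ?_)
  simp only [emw_eq]
  simp

theorem shift_const (H : (Fin 3 → ℂ) → ℂ) (hH : DifferentiableOn ℂ H TLambda3)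
    (hN : ∀ R : ℝ, ∃ N : ℝ≥0, ∀ y ∈ Lambda3, ‖y‖ ≤ R → ∫⁻ x, ‖H (tpt x y)‖ₑ ≤ N)
    (y y' : Fin 3 → ℝ) (hy : y ∈ Lambda3) (hy' : y' ∈ Lambda3) :
    ∫ x, H (tpt x y) = ∫ x, H (tpt x y') := by
  have hd : ∀ s ∈ Icc (0:ℝ) 1, HasDerivAt (fun s : ℝ => ∫ x, H (tpt x (y + s • (y' - y)))) 0 s := by
    intro s hs
    have hm : y + s • (y' - y) ∈ Lambda3 := by
      have := Lambda3_convex hy hy' (a := 1 - s) (b := s) (by linarith [hs.2]) hs.1 (by ring)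
      convert this using 1
      module
    have h1 := shift_local H hH hN (y + s • (y' - y)) (y' - y) hm
    have h2 : HasDerivAt (fun t : ℝ => t - s) 1 s := (hasDerivAt_id s).sub_const s
    have h3 := HasDerivAt.scomp (x := s) (h := fun t : ℝ => t - s) (by simpa using h1) h2
    simp only [smul_zero] at h3
    refine h3.congr_of_eventuallyEq (Filter.Eventually.of_forall fun t => ?_)
    simp only [Function.comp]
    congr 1
    funext x
    congr 2
    module
  have := constant_of_has_deriv_right_zero (f := fun s : ℝ => ∫ x, H (tpt x (y + s • (y' - y)))) (a := 0) (b := 1)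
    (fun s hs => (hd s hs).continuousAt.continuousWithinAt)
    (fun s hs => (hd s (Ico_subset_Icc_self hs)).hasDerivWithinAt) 1 (by simp)
  simpa using this.symm


/-- Euclidean three-space. -/
abbrev E3 := EuclideanSpace ℝ (Fin 3)

/-- real pairing -/
def rdot (y : Fin 3 → ℝ) (ξ : E3) : ℝ := y 0 * ξ 0 + y 1 * ξ 1 + y 2 * ξ 2

/-- complex pairing -/
def zdot (z : Fin 3 → ℂ) (ξ : E3) : ℂ := z 0 * (ξ 0 : ℂ) + z 1 * (ξ 1 : ℂ) + z 2 * (ξ 2 : ℂ)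

/-- The Fourier-Laplace integral of `k`. -/
def Phi (k : E3 → ℂ) (z : Fin 3 → ℂ) : ℂ := ∫ ξ, k ξ * Complex.exp (2 * Real.pi * Complex.I * zdot z ξ)

theorem zdot_im (z : Fin 3 → ℂ) (ξ : E3) : (zdot z ξ).im = rdot (fun i => (z i).im) ξ := by
  simp [zdot, rdot]

theorem norm_exp_zdot (z : Fin 3 → ℂ) (ξ : E3) :
    ‖Complex.exp (2 * Real.pi * Complex.I * zdot z ξ)‖ = Real.exp (-(2 * Real.pi * rdot (fun i => (z i).im) ξ)) := by
  rw [Complex.norm_exp, ← zdot_im]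
  congr 1
  simp [mul_assoc]

theorem continuous_rdot (y : Fin 3 → ℝ) : Continuous (rdot y) := by
  unfold rdot; fun_prop

theorem continuous_zdot (z : Fin 3 → ℂ) : Continuous (zdot z) := by
  unfold zdot; fun_prop

/-- derivative of `zdot` in `z` -/
def zdotL (ξ : E3) : (Fin 3 → ℂ) →L[ℂ] ℂ :=
  (ξ 0 : ℂ) • ContinuousLinearMap.proj 0 + (ξ 1 : ℂ) • ContinuousLinearMap.proj 1 + (ξ 2 : ℂ) • ContinuousLinearMap.proj 2

theorem zdotL_apply (ξ : E3) (z : Fin 3 → ℂ) : zdotL ξ z = zdot z ξ := by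
  simp [zdotL, zdot, mul_comm]

theorem norm_zdotL_le (ξ : E3) : ‖zdotL ξ‖ ≤ 3 * ‖ξ‖ := by
  apply ContinuousLinearMap.opNorm_le_bound _ (by positivity)
  intro z
  rw [zdotL_apply, zdot]
  have h : ∀ i, ‖z i * (ξ i : ℂ)‖ ≤ ‖ξ‖ * ‖z‖ := by
    intro i
    rw [norm_mul, mul_comm, Complex.norm_real]
    exact mul_le_mul (PiLp.norm_apply_le ξ i) (norm_le_pi_norm z i) (norm_nonneg _) (norm_nonneg _)
  refine (norm_add₃_le).trans ?_
  linarith [h 0, h 1, h 2]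

theorem continuous_zdotL : Continuous zdotL := by
  unfold zdotL; fun_prop

theorem Phi_deriv (k : E3 → ℂ) (hk : AEStronglyMeasurable k volume) (z : Fin 3 → ℂ) (ε : ℝ) (hε : 0 < ε)
    (b : E3 → ℝ) (hb : Integrable b)
    (hkb : ∀ z' ∈ Metric.ball z ε, ∀ ξ, ‖k ξ‖ * (1 + ‖ξ‖) * Real.exp (-(2 * Real.pi * rdot (fun i => (z' i).im) ξ)) ≤ b ξ) :
    DifferentiableAt ℂ (Phi k) z ∧
      ∀ i, pd i (Phi k) z = Phi (fun ξ => (2 * Real.pi * Complex.I * (ξ i : ℂ)) * k ξ) z := by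
  set F' : (Fin 3 → ℂ) → E3 → ((Fin 3 → ℂ) →L[ℂ] ℂ) := fun z ξ =>
    (k ξ * Complex.exp (2 * Real.pi * Complex.I * zdot z ξ) * (2 * Real.pi * Complex.I)) • zdotL ξ with hF'
  have hmeas : ∀ z, AEStronglyMeasurable (fun ξ => k ξ * Complex.exp (2 * Real.pi * Complex.I * zdot z ξ)) volume := by
    intro z
    apply hk.mul
    apply Continuous.aestronglyMeasurable
    have := continuous_zdot z
    fun_prop
  have hF'meas : AEStronglyMeasurable (F' z) volume :=
    ((hmeas z).mul_const _).smul continuous_zdotL.aestronglyMeasurable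
  have hbound : ∀ z' ∈ Metric.ball z ε, ∀ ξ, ‖F' z' ξ‖ ≤ 6 * Real.pi * b ξ := by
    intro z' hz' ξ
    rw [hF']
    simp only [norm_smul, norm_mul, norm_exp_zdot, Complex.norm_I, Complex.norm_real, Complex.norm_ofNat, mul_one,
      Real.norm_eq_abs, abs_of_pos Real.pi_pos]
    have h1 := hkb z' hz' ξ
    set X := ‖k ξ‖ * Real.exp (-(2 * Real.pi * rdot (fun i => (z' i).im) ξ)) with hX
    have hX0 : 0 ≤ X := by positivity
    have h2 : X * (1 + ‖ξ‖) ≤ b ξ := by rw [hX]; linarith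
    calc X * (2 * Real.pi) * ‖zdotL ξ‖ ≤ X * (2 * Real.pi) * (3 * ‖ξ‖) := by
          gcongr; exact norm_zdotL_le ξ
      _ = 6 * Real.pi * (X * ‖ξ‖) := by ring
      _ ≤ 6 * Real.pi * b ξ := by gcongr; nlinarith
  have hF'int : Integrable (F' z) volume :=
    (hb.const_mul (6 * Real.pi)).mono' hF'meas (Filter.Eventually.of_forall (hbound z (Metric.mem_ball_self hε)))
  have main := hasFDerivAt_integral_of_dominated_of_fderiv_le (𝕜 := ℂ) (μ := (volume : Measure E3)) (s := Metric.ball z ε) (x₀ := z)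
    (F := fun z ξ => k ξ * Complex.exp (2 * Real.pi * Complex.I * zdot z ξ)) (F' := F')
    (bound := fun ξ => 6 * Real.pi * b ξ) (Metric.ball_mem_nhds _ hε)
    (Filter.Eventually.of_forall hmeas)
    (hb.mono' (hmeas z) (Filter.Eventually.of_forall fun ξ => by
      have h1 := hkb z (Metric.mem_ball_self hε) ξ
      rw [norm_mul, norm_exp_zdot]
      refine le_trans ?_ h1
      apply mul_le_mul_of_nonneg_right _ (Real.exp_pos _).le
      nlinarith [norm_nonneg (k ξ), norm_nonneg ξ, mul_nonneg (norm_nonneg (k ξ)) (norm_nonneg ξ)]))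
    hF'meas (Filter.Eventually.of_forall fun ξ z' hz' => hbound z' hz' ξ) (hb.const_mul _)
    (Filter.Eventually.of_forall fun ξ z' _ => by
      have h1 : HasFDerivAt (fun z => zdot z ξ) (zdotL ξ) z' := by
        have := (zdotL ξ).hasFDerivAt (x := z')
        simpa only [← zdotL_apply] using this
      have h2 := ((h1.const_mul (2 * Real.pi * Complex.I)).cexp).const_mul (k ξ)
      have e : F' z' ξ = k ξ • Complex.exp (2 * Real.pi * Complex.I * zdot z' ξ) • (2 * Real.pi * Complex.I) • zdotL ξ := by
        rw [hF']
        simp only [smul_smul]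
        congr 1
        ring
      rw [e]
      exact h2)
  refine ⟨main.differentiableAt, fun i => ?_⟩
  have e : fderiv ℂ (Phi k) z = ∫ ξ, F' z ξ := main.fderiv
  rw [pd, e, ContinuousLinearMap.integral_apply hF'int, Phi]
  congr 1
  funext ξ
  rw [hF']
  simp only [_root_.smul_apply, zdotL_apply, zdot, smul_eq_mul]
  have : zdot (Pi.single i 1) ξ = (ξ i : ℂ) := by
    fin_cases i <;> simp [zdot]
  rw [zdot] at this
  rw [this]
  ring

/-- The closed forward cone in frequency space. -/
def SCone : Set E3 := {ξ | 0 ≤ ξ 0 ∧ (ξ 1)^2 + (ξ 2)^2 ≤ (ξ 0)^2}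

theorem isClosed_SCone : IsClosed SCone := by
  have h1 : IsClosed {ξ : E3 | 0 ≤ ξ 0} := isClosed_le continuous_const (by fun_prop)
  have h2 : IsClosed {ξ : E3 | (ξ 1)^2 + (ξ 2)^2 ≤ (ξ 0)^2} := isClosed_le (by fun_prop) (by fun_prop)
  exact h1.inter h2

theorem rdot_nonneg {y : Fin 3 → ℝ} (hy : y ∈ Lambda3) {ξ : E3} (hξ : ξ ∈ SCone) : 0 ≤ rdot y ξ := by
  rw [Lambda3_iff] at hy
  obtain ⟨a, b⟩ := hy
  obtain ⟨a', b'⟩ := hξ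
  have h : |y 1 * ξ 1 + y 2 * ξ 2| ≤ y 0 * ξ 0 := by
    apply abs_le_of_sq_le_sq _ (by positivity)
    calc _ ≤ ((y 1)^2 + (y 2)^2) * ((ξ 1)^2 + (ξ 2)^2) := by nlinarith [sq_nonneg (y 1 * ξ 2 - y 2 * ξ 1)]
      _ ≤ (y 0)^2 * (ξ 0)^2 := by
        apply mul_le_mul b.le b' (by positivity) (by positivity)
      _ = _ := by ring
  have := (abs_le.1 h).1
  unfold rdot
  linarith

theorem norm_le_of_SCone {ξ : E3} (hξ : ξ ∈ SCone) : ‖ξ‖ ≤ 2 * ξ 0 := by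
  obtain ⟨a', b'⟩ := hξ
  apply le_of_sq_le_sq _ (by positivity)
  rw [EuclideanSpace.norm_sq_eq, Fin.sum_univ_three]
  simp only [Real.norm_eq_abs, sq_abs]
  nlinarith

theorem cone_coercive {y : Fin 3 → ℝ} (hy : y ∈ Lambda3) :
    ∃ c > 0, ∃ ε > 0, ∀ y' : Fin 3 → ℝ, dist y' y < ε → ∀ ξ ∈ SCone, c * ‖ξ‖ ≤ rdot y' ξ := by
  obtain ⟨η, hη, h⟩ := Metric.isOpen_iff.1 isOpen_Lambda3 y hy
  refine ⟨η / 8, by positivity, η / 2, by positivity, fun y' hy' ξ hξ => ?_⟩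
  have hm : y' - Pi.single 0 (η/4) ∈ Lambda3 := by
    apply h
    rw [Metric.mem_ball]
    have h1 : dist (y' - Pi.single 0 (η/4)) y' = η / 4 := by
      rw [dist_eq_norm]
      rw [sub_sub_cancel_left, norm_neg, Pi.norm_single, Real.norm_of_nonneg (by positivity)]
    linarith [dist_triangle (y' - Pi.single 0 (η/4)) y' y]
  have h2 := rdot_nonneg hm hξ
  have h3 := norm_le_of_SCone hξ
  have h4 : rdot (y' - Pi.single 0 (η/4)) ξ = rdot y' ξ - η / 4 * ξ 0 := by
    simp [rdot]; ring
  rw [h4] at h2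
  nlinarith

/-- Admissible densities. -/
structure InK (k : E3 → ℂ) : Prop where
  meas : Measurable k
  supp : ∀ ξ, ξ ∉ SCone → k ξ = 0
  int : ∀ c > 0, Integrable (fun ξ => ‖k ξ‖ * Real.exp (-(c * ‖ξ‖)))

theorem poly_exp_bound {c t : ℝ} (hc : 0 < c) (ht : 0 ≤ t) :
    (1 + t) * Real.exp (-(c * t)) ≤ (1 + 2 / c) * Real.exp (-(c / 2 * t)) := by
  have h1 : c / 2 * t + 1 ≤ Real.exp (c / 2 * t) := Real.add_one_le_exp _
  have h2 : Real.exp (-(c * t)) = Real.exp (-(c / 2 * t)) * Real.exp (-(c / 2 * t)) := by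
    rw [← Real.exp_add]; congr 1; ring
  have h3 : Real.exp (-(c / 2 * t)) * Real.exp (c / 2 * t) = 1 := by rw [← Real.exp_add]; simp
  have h4 : 1 + t ≤ (1 + 2 / c) * Real.exp (c / 2 * t) := by
    have : (1 + 2 / c) * (c / 2 * t + 1) = 1 + t + c / 2 * t + 2 / c := by field_simp; ring
    have h5 : 0 ≤ c / 2 * t + 2 / c := by positivity
    have h6 := mul_le_mul_of_nonneg_left h1 (show 0 ≤ 1 + 2 / c by positivity)
    linarith
  rw [h2]
  calc (1 + t) * (Real.exp (-(c / 2 * t)) * Real.exp (-(c / 2 * t)))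
      ≤ ((1 + 2 / c) * Real.exp (c / 2 * t)) * (Real.exp (-(c / 2 * t)) * Real.exp (-(c / 2 * t))) := by gcongr
    _ = (1 + 2 / c) * Real.exp (-(c / 2 * t)) * (Real.exp (-(c / 2 * t)) * Real.exp (c / 2 * t)) := by ring
    _ = _ := by rw [h3, mul_one]

theorem InK.coord {k : E3 → ℂ} (hk : InK k) (i : Fin 3) :
    InK (fun ξ => (2 * Real.pi * Complex.I * (ξ i : ℂ)) * k ξ) where
  meas := by have := hk.meas; fun_prop
  supp ξ hξ := by simp [hk.supp ξ hξ]
  int c hc := by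
    refine ((hk.int (c / 2) (by positivity)).const_mul (2 * Real.pi * (1 + 2 / c))).mono' ?_ (Filter.Eventually.of_forall fun ξ => ?_)
    · have := hk.meas; fun_prop
    · have hp := poly_exp_bound hc (norm_nonneg ξ)
      have hi := PiLp.norm_apply_le ξ i
      rw [Real.norm_of_nonneg (by positivity)]
      simp only [norm_mul, Complex.norm_I, Complex.norm_real, Complex.norm_ofNat, mul_one,
        Real.norm_eq_abs, abs_of_pos Real.pi_pos]
      rw [Real.norm_eq_abs] at hi
      calc 2 * Real.pi * |ξ i| * ‖k ξ‖ * Real.exp (-(c * ‖ξ‖)) ≤ 2 * Real.pi * (1 + ‖ξ‖) * ‖k ξ‖ * Real.exp (-(c * ‖ξ‖)) := by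
            gcongr; linarith
        _ = 2 * Real.pi * ‖k ξ‖ * ((1 + ‖ξ‖) * Real.exp (-(c * ‖ξ‖))) := by ring
        _ ≤ 2 * Real.pi * ‖k ξ‖ * ((1 + 2 / c) * Real.exp (-(c / 2 * ‖ξ‖))) := by gcongr
        _ = _ := by ring

theorem InK.phi {k : E3 → ℂ} (hk : InK k) {z : Fin 3 → ℂ} (hz : z ∈ TLambda3) :
    DifferentiableAt ℂ (Phi k) z ∧
      ∀ i, pd i (Phi k) z = Phi (fun ξ => (2 * Real.pi * Complex.I * (ξ i : ℂ)) * k ξ) z := by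
  obtain ⟨c, hc, ε, hε, h⟩ := cone_coercive (y := fun i => (z i).im) hz
  apply Phi_deriv k hk.meas.aestronglyMeasurable z ε hε (fun ξ => (1 + 2 / (2 * Real.pi * c)) * (‖k ξ‖ * Real.exp (-((2 * Real.pi * c) / 2 * ‖ξ‖))))
    ((hk.int _ (by positivity)).const_mul _)
  intro z' hz' ξ
  by_cases hξ : ξ ∈ SCone
  · have h1 := h (fun i => (z' i).im) (by
      rw [Metric.mem_ball] at hz'
      refine lt_of_le_of_lt ?_ hz'
      rw [dist_pi_le_iff dist_nonneg]
      intro i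
      refine le_trans ?_ (dist_le_pi_dist z' z i)
      rw [Real.dist_eq, dist_eq_norm, ← Complex.sub_im]
      exact Complex.abs_im_le_norm _) ξ hξ
    have hp := poly_exp_bound (c := 2 * Real.pi * c) (by positivity) (norm_nonneg ξ)
    calc _ ≤ ‖k ξ‖ * (1 + ‖ξ‖) * Real.exp (-(2 * Real.pi * c * ‖ξ‖)) := by
          gcongr _ * Real.exp (- ?_)
          rw [mul_assoc]; gcongr
      _ = ‖k ξ‖ * ((1 + ‖ξ‖) * Real.exp (-(2 * Real.pi * c * ‖ξ‖))) := by ring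
      _ ≤ ‖k ξ‖ * ((1 + 2 / (2 * Real.pi * c)) * Real.exp (-((2 * Real.pi * c) / 2 * ‖ξ‖))) := by gcongr
      _ = _ := by ring
  · simp [hk.supp ξ hξ]

theorem pd_congr {F G : (Fin 3 → ℂ) → ℂ} (h : ∀ z ∈ TLambda3, F z = G z) (i : Fin 3) :
    ∀ z ∈ TLambda3, pd i F z = pd i G z := by
  intro z hz
  unfold pd
  have : F =ᶠ[nhds z] G := by
    filter_upwards [isOpen_TLambda3.mem_nhds hz] with w hw using h w hw
  rw [this.fderiv_eq]

theorem InK.box_int {k : E3 → ℂ} (hk : InK k) {z : Fin 3 → ℂ} (hz : z ∈ TLambda3) :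
    Integrable (fun ξ => k ξ * Complex.exp (2 * Real.pi * Complex.I * zdot z ξ)) := by
  obtain ⟨c, hc, ε, hε, h⟩ := cone_coercive (y := fun i => (z i).im) hz
  refine (hk.int (2 * Real.pi * c) (by positivity)).mono' ?_ (Filter.Eventually.of_forall fun ξ => ?_)
  · apply hk.meas.aestronglyMeasurable.mul
    apply Continuous.aestronglyMeasurable
    have := continuous_zdot z
    fun_prop
  · by_cases hξ : ξ ∈ SCone
    · have h1 := h (fun i => (z i).im) (by simpa using hε) ξ hξ
      rw [norm_mul, norm_exp_zdot]
      gcongr _ * Real.exp (- ?_)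
      rw [mul_assoc]; gcongr
    · simp [hk.supp ξ hξ]

/-- The Lorentz form on frequencies. -/
def dl (ξ : E3) : ℝ := (ξ 0)^2 - (ξ 1)^2 - (ξ 2)^2

theorem InK.add {k l : E3 → ℂ} (hk : InK k) (hl : InK l) : InK (fun ξ => k ξ + l ξ) where
  meas := hk.meas.add hl.meas
  supp ξ hξ := by simp [hk.supp ξ hξ, hl.supp ξ hξ]
  int c hc := by
    refine ((hk.int c hc).add (hl.int c hc)).mono' ?_ (Filter.Eventually.of_forall fun ξ => ?_)
    · have := hk.meas; have := hl.meas; fun_prop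
    · rw [Real.norm_of_nonneg (by positivity)]
      simp only [Pi.add_apply]
      rw [← add_mul]
      gcongr
      exact norm_add_le _ _

theorem InK.neg {k : E3 → ℂ} (hk : InK k) : InK (fun ξ => - k ξ) where
  meas := hk.meas.neg
  supp ξ hξ := by simp [hk.supp ξ hξ]
  int c hc := by simpa using hk.int c hc

theorem box_step {F : (Fin 3 → ℂ) → ℂ} {k : E3 → ℂ} (hk : InK k) (hF : ∀ z ∈ TLambda3, F z = Phi k z) :
    InK (fun ξ => ((4 * Real.pi ^ 2 * dl ξ : ℝ) : ℂ) * k ξ) ∧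
    ∀ z ∈ TLambda3, Box F z = Phi (fun ξ => ((4 * Real.pi ^ 2 * dl ξ : ℝ) : ℂ) * k ξ) z := by
  have hcc : ∀ i, InK (fun ξ => (2 * Real.pi * Complex.I * (ξ i : ℂ)) * ((2 * Real.pi * Complex.I * (ξ i : ℂ)) * k ξ)) :=
    fun i => (hk.coord i).coord i
  have hpd : ∀ i, ∀ z ∈ TLambda3, pd i (pd i F) z = Phi (fun ξ => (2 * Real.pi * Complex.I * (ξ i : ℂ)) * ((2 * Real.pi * Complex.I * (ξ i : ℂ)) * k ξ)) z := by
    intro i z hz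
    have h1 : ∀ z ∈ TLambda3, pd i F z = Phi (fun ξ => (2 * Real.pi * Complex.I * (ξ i : ℂ)) * k ξ) z := by
      intro z hz
      rw [pd_congr hF i z hz]
      exact (hk.phi hz).2 i
    rw [pd_congr h1 i z hz]
    exact ((hk.coord i).phi hz).2 i
  have e : (fun ξ : E3 => ((4 * Real.pi ^ 2 * dl ξ : ℝ) : ℂ) * k ξ) = fun ξ => 
     (- ((2 * Real.pi * Complex.I * (ξ 0 : ℂ)) * ((2 * Real.pi * Complex.I * (ξ 0 : ℂ)) * k ξ))
     + ((2 * Real.pi * Complex.I * (ξ 1 : ℂ)) * ((2 * Real.pi * Complex.I * (ξ 1 : ℂ)) * k ξ)))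
     + ((2 * Real.pi * Complex.I * (ξ 2 : ℂ)) * ((2 * Real.pi * Complex.I * (ξ 2 : ℂ)) * k ξ)) := by
    funext ξ
    simp only [dl]
    push_cast
    linear_combination (4 * (Real.pi : ℂ)^2 * ((ξ 0 : ℂ)^2 - (ξ 1 : ℂ)^2 - (ξ 2 : ℂ)^2) * k ξ) * Complex.I_sq
  rw [e]
  refine ⟨((hcc 0).neg.add (hcc 1)).add (hcc 2), fun z hz => ?_⟩
  unfold Box
  rw [hpd 0 z hz, hpd 1 z hz, hpd 2 z hz]
  simp only [Phi]
  simp only [add_mul, neg_mul]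
  have i0 := (hcc 0).box_int hz
  have i1 := (hcc 1).box_int hz
  have i2 := (hcc 2).box_int hz
  have s1 := integral_add (i0.neg.add i1) i2
  have s2 := integral_add i0.neg i1
  have s3 := integral_neg (μ := (volume : Measure E3)) (fun ξ : E3 => 2 * ↑Real.pi * Complex.I * ↑(ξ.ofLp 0) * (2 * ↑Real.pi * Complex.I * ↑(ξ.ofLp 0) * k ξ) *
        Complex.exp (2 * ↑Real.pi * Complex.I * zdot z ξ))
  simp only [Pi.add_apply, Pi.neg_apply] at s1 s2 s3
  rw [s1, s2, s3]

theorem box_iter {F : (Fin 3 → ℂ) → ℂ} {k : E3 → ℂ} (hk : InK k) (hF : ∀ z ∈ TLambda3, F z = Phi k z) (m : ℕ) :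
    InK (fun ξ => (((4 * Real.pi ^ 2 * dl ξ)^m : ℝ) : ℂ) * k ξ) ∧
    ∀ z ∈ TLambda3, Box^[m] F z = Phi (fun ξ => (((4 * Real.pi ^ 2 * dl ξ)^m : ℝ) : ℂ) * k ξ) z := by
  induction m with
  | zero => simpa using ⟨hk, hF⟩
  | succ n ih =>
    have := box_step ih.1 ih.2
    rw [Function.iterate_succ_apply']
    have e : (fun ξ : E3 => (((4 * Real.pi ^ 2 * dl ξ)^(n+1) : ℝ) : ℂ) * k ξ) =
      fun ξ => ((4 * Real.pi ^ 2 * dl ξ : ℝ) : ℂ) * ((((4 * Real.pi ^ 2 * dl ξ)^n : ℝ) : ℂ) * k ξ) := by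
      funext ξ; push_cast; ring
    rw [e]
    exact this


section PaleyWiener
open FourierTransform SchwartzMap

theorem lint_E3 (f : (Fin 3 → ℝ) → ℝ≥0∞) : ∫⁻ x : E3, f x.ofLp = ∫⁻ x, f x :=
  (PiLp.volume_preserving_ofLp (Fin 3)).lintegral_comp_emb (MeasurableEquiv.toLp 2 (Fin 3 → ℝ)).symm.measurableEmbedding f

theorem int_E3 (f : (Fin 3 → ℝ) → ℂ) : ∫ x : E3, f x.ofLp = ∫ x, f x :=
  (PiLp.volume_preserving_ofLp (Fin 3)).integral_comp (MeasurableEquiv.toLp 2 (Fin 3 → ℝ)).symm.measurableEmbedding f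

/-- horizontal slices of a function on the tube -/
def slice (F : (Fin 3 → ℂ) → ℂ) (y : Fin 3 → ℝ) : E3 → ℂ := fun x => F (tpt x.ofLp y)

theorem slice_lint (F : (Fin 3 → ℂ) → ℂ) {y : Fin 3 → ℝ} (hy : y ∈ Lambda3) :
    ∫⁻ x, ‖slice F y x‖ₑ ^ 2 ≤ hardyNormSq F := by
  unfold slice
  rw [lint_E3 (fun x => ‖F (tpt x y)‖ₑ ^ 2)]
  unfold hardyNormSq
  exact le_iSup₂ (f := fun (y : Fin 3 → ℝ) (_ : y ∈ Lambda3) => ∫⁻ x : Fin 3 → ℝ, (‖F (fun i => (x i : ℂ) + (y i : ℂ) * Complex.I)‖₊ : ℝ≥0∞) ^ 2) y hy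

theorem slice_cont {F : (Fin 3 → ℂ) → ℂ} (hF : DifferentiableOn ℂ F TLambda3) {y : Fin 3 → ℝ} (hy : y ∈ Lambda3) :
    Continuous (slice F y) := by
  unfold slice
  apply hF.continuousOn.comp_continuous
  · have : Continuous (fun x : E3 => (x.ofLp, y)) := by fun_prop
    exact tpt_continuous.comp this
  · intro x; exact tpt_mem hy

theorem slice_memLp {F : (Fin 3 → ℂ) → ℂ} (hF : DifferentiableOn ℂ F TLambda3) (hM : hardyNormSq F < ⊤)
    {y : Fin 3 → ℝ} (hy : y ∈ Lambda3) : MemLp (slice F y) 2 volume :=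
  aux_memLp_two _ (slice_cont hF hy).aestronglyMeasurable ((slice_lint F hy).trans_lt hM)

theorem abs_rdot_le (y : Fin 3 → ℝ) (ξ : E3) : |rdot y ξ| ≤ 3 * ‖y‖ * ‖ξ‖ := by
  have h : ∀ i, |y i * ξ i| ≤ ‖y‖ * ‖ξ‖ := by
    intro i
    rw [abs_mul]
    exact mul_le_mul (norm_le_pi_norm y i) (PiLp.norm_apply_le ξ i) (abs_nonneg _) (norm_nonneg _)
  unfold rdot
  refine (abs_add_three _ _ _).trans ?_
  linarith [h 0, h 1, h 2]

theorem contDiff_rdot (y : Fin 3 → ℝ) {n : WithTop ℕ∞} : ContDiff ℝ n (rdot y) := by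
  unfold rdot; fun_prop

/-- weighted test function -/
def wtest (ψ : E3 → ℝ) (y : Fin 3 → ℝ) : E3 → ℂ := fun ξ => ((ψ ξ * Real.exp (2 * Real.pi * rdot y ξ) : ℝ) : ℂ)

theorem wtest_cpt {ψ : E3 → ℝ} (hc : HasCompactSupport ψ) (y : Fin 3 → ℝ) : HasCompactSupport (wtest ψ y) := by
  apply hc.mono
  intro ξ hξ h0
  apply hξ
  simp [wtest, h0]

theorem wtest_smooth {ψ : E3 → ℝ} (hs : ContDiff ℝ (⊤ : ℕ∞) ψ) (y : Fin 3 → ℝ) : ContDiff ℝ (⊤ : ℕ∞) (wtest ψ y) := by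
  have h1 : ContDiff ℝ (⊤ : ℕ∞) (fun ξ => ψ ξ * Real.exp (2 * Real.pi * rdot y ξ)) := by
    have := contDiff_rdot y (n := (⊤ : ℕ∞))
    fun_prop
  exact Complex.ofRealCLM.contDiff.comp h1

/-- weighted test function as a Schwartz map -/
def wS {ψ : E3 → ℝ} (hs : ContDiff ℝ (⊤ : ℕ∞) ψ) (hc : HasCompactSupport ψ) (y : Fin 3 → ℝ) : 𝓢(E3, ℂ) :=
  (wtest_cpt hc y).toSchwartzMap (wtest_smooth hs y)

theorem wS_apply {ψ : E3 → ℝ} (hs : ContDiff ℝ (⊤ : ℕ∞) ψ) (hc : HasCompactSupport ψ) (y : Fin 3 → ℝ) (ξ : E3) :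
  wS hs hc y ξ = ((ψ ξ * Real.exp (2 * Real.pi * rdot y ξ) : ℝ) : ℂ) := rfl

theorem fourier_wS {ψ : E3 → ℝ} (hs : ContDiff ℝ (⊤ : ℕ∞) ψ) (hc : HasCompactSupport ψ) (y : Fin 3 → ℝ) (x : E3) :
    𝓕 (wS hs hc y : E3 → ℂ) x = Phi (fun ξ => (ψ ξ : ℂ)) (-(tpt x.ofLp y)) := by
  rw [Real.fourier_eq', Phi]
  congr 1
  funext ξ
  rw [wS_apply, smul_eq_mul, mul_comm, Complex.ofReal_mul (ψ ξ), mul_assoc (ψ ξ : ℂ), Complex.ofReal_exp, ← Complex.exp_add]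
  congr 2
  have : (inner ℝ ξ x : ℝ) = rdot x.ofLp ξ := by
    simp [PiLp.inner_apply, Fin.sum_univ_three, rdot]
  rw [this]
  simp only [rdot, zdot, tpt, Pi.neg_apply]
  push_cast
  linear_combination (2 * Real.pi * ((y 0 : ℂ) * ξ 0 + y 1 * ξ 1 + y 2 * ξ 2)) * Complex.I_sq

theorem diff_test {ψ : E3 → ℝ} (hs : Continuous ψ) (hc : HasCompactSupport ψ) (z : Fin 3 → ℂ) :
    DifferentiableAt ℂ (Phi (fun ξ => (ψ ξ : ℂ))) z := by
  refine (Phi_deriv _ (by fun_prop) z 1 one_pos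
    (fun ξ => ‖ψ ξ‖ * ((1 + ‖ξ‖) * Real.exp (2 * Real.pi * (3 * (‖z‖ + 1) * ‖ξ‖)))) ?_ ?_).1
  · apply Continuous.integrable_of_hasCompactSupport
    · fun_prop
    · exact hc.norm.mul_right
  · intro z' hz' ξ
    rw [Complex.norm_real, mul_assoc]
    gcongr
    have h1 := (abs_le.1 (abs_rdot_le (fun i => (z' i).im) ξ)).1
    have h2 : ‖(fun i => (z' i).im)‖ ≤ ‖z‖ + 1 := by
      have : ‖(fun i => (z' i).im)‖ ≤ ‖z'‖ := by
        rw [pi_norm_le_iff_of_nonneg (norm_nonneg _)]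
        intro i
        exact (Complex.abs_im_le_norm _).trans (norm_le_pi_norm z' i)
      have h3 := norm_le_norm_add_norm_sub' z' z
      rw [mem_ball_iff_norm] at hz'
      linarith
    have h4 : 3 * ‖(fun i => (z' i).im)‖ * ‖ξ‖ ≤ 3 * (‖z‖ + 1) * ‖ξ‖ := by gcongr
    have := Real.pi_pos
    nlinarith

theorem ennreal_mul_le_sq (a b : ℝ≥0∞) : a * b ≤ a ^ 2 + b ^ 2 := by
  rcases le_total a b with h | h
  · calc a * b ≤ b * b := by gcongr
      _ = b ^ 2 := (sq b).symm
      _ ≤ _ := le_add_self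
  · calc a * b ≤ a * a := by gcongr
      _ = a ^ 2 := (sq a).symm
      _ ≤ _ := le_self_add

theorem wS_bound {ψ : E3 → ℝ} (hs : ContDiff ℝ (⊤ : ℕ∞) ψ) (hc : HasCompactSupport ψ) (R : ℝ) :
    ∃ N : ℝ≥0, ∀ y : Fin 3 → ℝ, ‖y‖ ≤ R → ∫⁻ ξ, ‖wS hs hc y ξ‖ₑ ^ 2 ≤ N := by
  have hcont := hs.continuous
  have hmem : MemLp (fun ξ => ((ψ ξ * Real.exp (2 * Real.pi * (3 * R * ‖ξ‖)) : ℝ) : ℂ)) 2 (volume : Measure E3) := by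
    apply Continuous.memLp_of_hasCompactSupport
    · fun_prop
    · apply hc.mono
      intro ξ hξ h0
      apply hξ
      simp [h0]
  have hfin : ∫⁻ ξ : E3, ‖((ψ ξ * Real.exp (2 * Real.pi * (3 * R * ‖ξ‖)) : ℝ) : ℂ)‖ₑ ^ 2 < ⊤ := by
    rw [aux_lintegral_sq]
    exact ENNReal.pow_lt_top hmem.2
  refine ⟨(∫⁻ ξ : E3, ‖((ψ ξ * Real.exp (2 * Real.pi * (3 * R * ‖ξ‖)) : ℝ) : ℂ)‖ₑ ^ 2).toNNReal, fun y hy => ?_⟩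
  rw [ENNReal.coe_toNNReal hfin.ne]
  apply lintegral_mono
  intro ξ
  dsimp only
  gcongr
  rw [wS_apply, enorm_le_iff_norm_le, Complex.norm_real, Complex.norm_real, norm_mul, norm_mul, Real.norm_of_nonneg (Real.exp_pos _).le, Real.norm_of_nonneg (Real.exp_pos _).le]
  gcongr
  have := (abs_le.1 (abs_rdot_le y ξ)).2
  refine this.trans ?_
  gcongr

theorem test_indep {F : (Fin 3 → ℂ) → ℂ} (hF : DifferentiableOn ℂ F TLambda3) (hM : hardyNormSq F < ⊤)
    {ψ : E3 → ℝ} (hs : ContDiff ℝ (⊤ : ℕ∞) ψ) (hc : HasCompactSupport ψ) {y y' : Fin 3 → ℝ} (hy : y ∈ Lambda3) (hy' : y' ∈ Lambda3) :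
    ∫ x, 𝓕 (wS hs hc y : E3 → ℂ) x • slice F y x = ∫ x, 𝓕 (wS hs hc y' : E3 → ℂ) x • slice F y' x := by
  simp only [fourier_wS, slice, smul_eq_mul]
  rw [int_E3 (fun x => Phi (fun ξ => (ψ ξ : ℂ)) (-(tpt x y)) * F (tpt x y)),
    int_E3 (fun x => Phi (fun ξ => (ψ ξ : ℂ)) (-(tpt x y')) * F (tpt x y'))]
  refine shift_const (fun z => Phi (fun ξ => (ψ ξ : ℂ)) (-z) * F z) ?_ ?_ y y' hy hy'
  · intro z hz
    refine DifferentiableWithinAt.mul ?_ (hF z hz)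
    apply DifferentiableAt.differentiableWithinAt
    exact (diff_test hs.continuous hc (-z)).comp z differentiableAt_id.neg
  · intro R
    obtain ⟨N, hN⟩ := wS_bound hs hc R
    refine ⟨N + (hardyNormSq F).toNNReal, fun y hy hR => ?_⟩
    push_cast
    rw [ENNReal.coe_toNNReal hM.ne]
    rw [← lint_E3 (fun x => ‖Phi (fun ξ => (ψ ξ : ℂ)) (-(tpt x y)) * F (tpt x y)‖ₑ)]
    calc _ ≤ ∫⁻ x : E3, (‖𝓕 (wS hs hc y : E3 → ℂ) x‖ₑ ^ 2 + ‖slice F y x‖ₑ ^ 2) := by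
          apply lintegral_mono
          intro x
          dsimp only
          rw [enorm_mul, fourier_wS]
          exact ennreal_mul_le_sq _ _
      _ = (∫⁻ x : E3, ‖𝓕 (wS hs hc y : E3 → ℂ) x‖ₑ ^ 2) + ∫⁻ x, ‖slice F y x‖ₑ ^ 2 := by
          apply lintegral_add_right
          have := (slice_cont hF hy).measurable
          fun_prop
      _ ≤ _ := by
          rw [aux_schwartz_plancherel]
          exact add_le_add (hN y hR) (slice_lint F hy)

/-- Fourier transform of a slice -/
def gh {F : (Fin 3 → ℂ) → ℂ} (hF : DifferentiableOn ℂ F TLambda3) (hM : hardyNormSq F < ⊤)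
    {y : Fin 3 → ℝ} (hy : y ∈ Lambda3) : Lp (α := E3) ℂ 2 volume := 𝓕 ((slice_memLp hF hM hy).toLp _)

theorem gh_indep {F : (Fin 3 → ℂ) → ℂ} (hF : DifferentiableOn ℂ F TLambda3) (hM : hardyNormSq F < ⊤)
    {y y' : Fin 3 → ℝ} (hy : y ∈ Lambda3) (hy' : y' ∈ Lambda3) :
    (fun ξ => (Real.exp (2 * Real.pi * rdot y ξ)) • gh hF hM hy ξ) =ᵐ[volume]
     (fun ξ => (Real.exp (2 * Real.pi * rdot y' ξ)) • gh hF hM hy' ξ) := by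
  have hL : ∀ {y : Fin 3 → ℝ} (hy : y ∈ Lambda3), LocallyIntegrable (fun ξ => (Real.exp (2 * Real.pi * rdot y ξ)) • gh hF hM hy ξ) volume := by
    intro y hy
    have h1 : LocallyIntegrable (gh hF hM hy : E3 → ℂ) volume := (Lp.memLp _).locallyIntegrable (by norm_num)
    have h2 : Continuous (fun ξ => (Real.exp (2 * Real.pi * rdot y ξ))) := by
      have := continuous_rdot y
      fun_prop
    exact h1.continuous_smul h2
  apply ae_eq_of_integral_contDiff_smul_eq (hL hy) (hL hy')
  intro ψ hs hc
  have key : ∀ {y : Fin 3 → ℝ} (hy : y ∈ Lambda3), ∫ x, ψ x • ((Real.exp (2 * Real.pi * rdot y x)) • gh hF hM hy x)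
     = ∫ x, 𝓕 (wS hs hc y : E3 → ℂ) x • slice F y x := by
    intro y hy
    have h1 := aux_pair_fourier ((slice_memLp hF hM hy).toLp _) (wS hs hc y)
    have h2 : ∫ x, 𝓕 (wS hs hc y : E3 → ℂ) x • ((slice_memLp hF hM hy).toLp _) x = ∫ x, 𝓕 (wS hs hc y : E3 → ℂ) x • slice F y x := by
      apply integral_congr_ae
      filter_upwards [(slice_memLp hF hM hy).coeFn_toLp] with x hx
      rw [hx]
    rw [← h2, ← h1]
    congr 1
    funext x
    rw [wS_apply, smul_smul, ← Complex.coe_smul]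
    rfl
  rw [key hy, key hy']
  exact test_indep hF hM hs hc hy hy'

theorem gh_lint {F : (Fin 3 → ℂ) → ℂ} (hF : DifferentiableOn ℂ F TLambda3) (hM : hardyNormSq F < ⊤)
    {y : Fin 3 → ℝ} (hy : y ∈ Lambda3) : ∫⁻ ξ, ‖gh hF hM hy ξ‖ₑ ^ 2 ≤ hardyNormSq F := by
  refine le_trans (le_of_eq ?_) (slice_lint F hy)
  rw [aux_lintegral_sq, aux_lintegral_sq, gh, aux_eLpNorm_fourier, eLpNorm_congr_ae (MemLp.coeFn_toLp _)]

end PaleyWiener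


section PaleyWiener2
open FourierTransform SchwartzMap

/-- base point -/
def pe0 : Fin 3 → ℝ := ![1, 0, 0]

theorem pe0_mem : pe0 ∈ Lambda3 := by
  rw [Lambda3_iff]; simp [pe0]

theorem rdot_pe0 (ξ : E3) : rdot pe0 ξ = ξ 0 := by simp [rdot, pe0]

theorem rdot_smul (c : ℝ) (y : Fin 3 → ℝ) (ξ : E3) : rdot (c • y) ξ = c * rdot y ξ := by
  simp [rdot]; ring

/-- the spectral density, before truncation -/
def g1 {F : (Fin 3 → ℂ) → ℂ} (hF : DifferentiableOn ℂ F TLambda3) (hM : hardyNormSq F < ⊤) : E3 → ℂ :=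
  fun ξ => Real.exp (2 * Real.pi * rdot pe0 ξ) • gh hF hM pe0_mem ξ

section
variable {F : (Fin 3 → ℂ) → ℂ} (hF : DifferentiableOn ℂ F TLambda3) (hM : hardyNormSq F < ⊤)

theorem g1_meas : Measurable (g1 hF hM) := by
  unfold g1
  have h1 := (Lp.stronglyMeasurable (gh hF hM pe0_mem)).measurable
  have h2 := continuous_rdot pe0
  have h3 : Measurable (fun ξ => Real.exp (2 * Real.pi * rdot pe0 ξ)) := by fun_prop
  exact h3.smul h1

theorem gh_eq {y : Fin 3 → ℝ} (hy : y ∈ Lambda3) :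
    (gh hF hM hy : E3 → ℂ) =ᵐ[volume] fun ξ => Real.exp (-(2 * Real.pi * rdot y ξ)) • g1 hF hM ξ := by
  filter_upwards [gh_indep hF hM hy pe0_mem] with ξ h
  rw [g1, ← h, smul_smul, ← Real.exp_add]
  simp

theorem g1_lint {y : Fin 3 → ℝ} (hy : y ∈ Lambda3) :
    ∫⁻ ξ, ENNReal.ofReal (Real.exp (-(4 * Real.pi * rdot y ξ))) * ‖g1 hF hM ξ‖ₑ ^ 2 ≤ hardyNormSq F := by
  refine le_trans (le_of_eq ?_) (gh_lint hF hM hy)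
  apply lintegral_congr_ae
  filter_upwards [gh_eq hF hM hy] with ξ h
  rw [h, enorm_smul, mul_pow]
  congr 1
  rw [Real.enorm_eq_ofReal (Real.exp_pos _).le, ← ENNReal.ofReal_pow (Real.exp_pos _).le, ← Real.exp_nat_mul]
  congr 2
  push_cast; ring

theorem g1_zero {q : Fin 3 → ℝ} (hq : q ∈ Lambda3) {r : ℝ} (hr : 0 < r) :
    ∀ᵐ ξ : E3, rdot q ξ ≤ -r → g1 hF hM ξ = 0 := by
  set S : Set E3 := {ξ | rdot q ξ ≤ -r} with hS
  have hSm : MeasurableSet S := measurableSet_le (continuous_rdot q).measurable measurable_const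
  have hg := g1_meas hF hM
  have hb : ∀ n : ℕ, (n : ℝ≥0∞) * ∫⁻ ξ in S, ‖g1 hF hM ξ‖ₑ ^ 2 ≤ hardyNormSq F := by
    intro n
    rcases Nat.eq_zero_or_pos n with h0 | hn
    · simp [h0]
    have hn' : (0 : ℝ) < n := by exact_mod_cast hn
    have hc : 0 < (n : ℝ) / (4 * Real.pi * r) := by positivity
    refine le_trans ?_ (g1_lint hF hM (Lambda3_smul hq hc))
    rw [← lintegral_const_mul _ (by fun_prop)]
    refine le_trans (setLIntegral_mono' hSm ?_) (setLIntegral_le_lintegral S _)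
    intro ξ hξ
    gcongr
    rw [rdot_smul, ← ENNReal.ofReal_natCast]
    apply ENNReal.ofReal_le_ofReal
    have h1 : (n : ℝ) ≤ -(4 * Real.pi * (n / (4 * Real.pi * r) * rdot q ξ)) := by
      have : 4 * Real.pi * (n / (4 * Real.pi * r) * rdot q ξ) = n / r * rdot q ξ := by field_simp
      rw [this]
      have h2 : n / r * rdot q ξ ≤ n / r * (-r) := by gcongr; exact hξ
      have h3 : n / r * (-r) = -(n : ℝ) := by field_simp
      linarith
    linarith [Real.add_one_le_exp (-(4 * Real.pi * (n / (4 * Real.pi * r) * rdot q ξ)))]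
  have hz : ∫⁻ ξ in S, ‖g1 hF hM ξ‖ₑ ^ 2 = 0 := by
    by_contra hne
    obtain ⟨n, hn⟩ := ENNReal.exists_nat_mul_gt hne hM.ne
    exact absurd (hb n) (not_le.2 hn)
  rw [lintegral_eq_zero_iff (by fun_prop)] at hz
  rw [Filter.EventuallyEq, ae_restrict_iff' hSm] at hz
  filter_upwards [hz] with ξ h hξ
  simpa using h hξ

theorem exists_neg_rdot {ξ : E3} (hξ : ξ ∉ SCone) : ∃ y ∈ Lambda3, rdot y ξ < 0 := by
  by_cases h0 : 0 ≤ ξ 0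
  · have h1 : (ξ 0)^2 < (ξ 1)^2 + (ξ 2)^2 := by
      by_contra hc
      exact hξ ⟨h0, not_lt.1 hc⟩
    set ρ := Real.sqrt ((ξ 1)^2 + (ξ 2)^2) with hρ
    have hsq : ρ ^ 2 = (ξ 1)^2 + (ξ 2)^2 := Real.sq_sqrt (by positivity)
    have hlt : ξ 0 < ρ := Real.lt_sqrt_of_sq_lt h1
    have hρ0 : 0 < ρ := by linarith
    have hgt : ρ < 2 * ρ ^ 2 / (ρ + ξ 0) := by
      rw [lt_div_iff₀ (by positivity)]; nlinarith
    refine ⟨![2 * ρ ^ 2 / (ρ + ξ 0), -ξ 1, -ξ 2], ?_, ?_⟩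
    · rw [Lambda3_iff]
      simp
      refine ⟨by positivity, ?_⟩
      rw [← hsq]
      gcongr
    · simp [rdot]
      have h2 : 2 * ρ ^ 2 / (ρ + ξ 0) * ξ 0 < ρ ^ 2 := by
        rw [div_mul_eq_mul_div, div_lt_iff₀ (by positivity)]
        nlinarith [pow_pos hρ0 2]
      nlinarith
  · exact ⟨pe0, pe0_mem, by rw [rdot_pe0]; linarith⟩

theorem g1_supp : ∀ᵐ ξ : E3, ξ ∉ SCone → g1 hF hM ξ = 0 := by
  have h : ∀ᵐ ξ : E3, ∀ n k : ℕ, TopologicalSpace.denseSeq (Fin 3 → ℝ) n ∈ Lambda3 →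
     rdot (TopologicalSpace.denseSeq (Fin 3 → ℝ) n) ξ ≤ -(1 / ((k : ℝ) + 1)) → g1 hF hM ξ = 0 := by
    rw [ae_all_iff]; intro n
    rw [ae_all_iff]; intro k
    by_cases hn : TopologicalSpace.denseSeq (Fin 3 → ℝ) n ∈ Lambda3
    · filter_upwards [g1_zero hF hM hn (r := 1 / ((k : ℝ) + 1)) (by positivity)] with ξ h _ using h
    · exact Filter.Eventually.of_forall fun ξ h => absurd h hn
  filter_upwards [h] with ξ h hξ
  obtain ⟨y, hy, hneg⟩ := exists_neg_rdot hξ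
  have hopen : IsOpen (Lambda3 ∩ {y | rdot y ξ < 0}) := by
    apply isOpen_Lambda3.inter
    apply isOpen_lt _ continuous_const
    unfold rdot; fun_prop
  obtain ⟨y', hy', n, rfl⟩ := (TopologicalSpace.denseRange_denseSeq (Fin 3 → ℝ)).exists_mem_open hopen ⟨y, hy, hneg⟩ |>.elim
    (fun n hn => (⟨_, hn, n, rfl⟩ : ∃ y', y' ∈ (Lambda3 ∩ {y | rdot y ξ < 0}) ∧ ∃ n, TopologicalSpace.denseSeq (Fin 3 → ℝ) n = y'))
  have hlt : 0 < -rdot (TopologicalSpace.denseSeq (Fin 3 → ℝ) n) ξ := by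
    have h3 : rdot (TopologicalSpace.denseSeq (Fin 3 → ℝ) n) ξ < 0 := hy'.2
    linarith
  obtain ⟨k, hk⟩ := exists_nat_one_div_lt hlt
  exact h n k hy'.1 (by linarith)

/-- the spectral density -/
def g0 : E3 → ℂ := SCone.indicator (g1 hF hM)

theorem g0_ae : g0 hF hM =ᵐ[volume] g1 hF hM := by
  filter_upwards [g1_supp hF hM] with ξ h
  by_cases hξ : ξ ∈ SCone
  · simp [g0, hξ]
  · simp [g0, hξ, h hξ]

theorem g0_meas : Measurable (g0 hF hM) := (g1_meas hF hM).indicator isClosed_SCone.measurableSet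

theorem g0_lint : ∫⁻ ξ, ‖g0 hF hM ξ‖ₑ ^ 2 ≤ hardyNormSq F := by
  have hg := g1_meas hF hM
  have hg0 := g0_meas hF hM
  have hfm : ∀ n : ℕ, Measurable (fun ξ : E3 => ENNReal.ofReal (Real.exp (-(4 * Real.pi * rdot ((1 / ((n : ℝ) + 1)) • pe0) ξ))) * ‖g1 hF hM ξ‖ₑ ^ 2) := by
    intro n
    have := continuous_rdot ((1 / ((n : ℝ) + 1)) • pe0)
    have := this.measurable
    fun_prop
  have h1 : ∫⁻ ξ, ‖g0 hF hM ξ‖ₑ ^ 2 = ∫⁻ ξ : E3, Filter.liminf (fun n : ℕ => ENNReal.ofReal (Real.exp (-(4 * Real.pi * rdot ((1 / ((n : ℝ) + 1)) • pe0) ξ))) * ‖g1 hF hM ξ‖ₑ ^ 2) Filter.atTop := by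
    apply lintegral_congr_ae
    filter_upwards [g0_ae hF hM] with ξ h
    rw [h]
    refine (Filter.Tendsto.liminf_eq ?_).symm
    have ht : Filter.Tendsto (fun n : ℕ => ENNReal.ofReal (Real.exp (-(4 * Real.pi * rdot ((1 / ((n : ℝ) + 1)) • pe0) ξ)))) Filter.atTop (nhds 1) := by
      rw [← ENNReal.ofReal_one]
      apply ENNReal.tendsto_ofReal
      have h0 : nhds (1 : ℝ) = nhds (Real.exp 0) := by rw [Real.exp_zero]
      rw [h0]
      apply (Real.continuous_exp.tendsto 0).comp
      have h2 := (tendsto_one_div_add_atTop_nhds_zero_nat (𝕜 := ℝ)).mul_const (-(4 * Real.pi * rdot pe0 ξ))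
      rw [zero_mul] at h2
      refine h2.congr fun n => ?_
      rw [rdot_smul]; ring
    have := ENNReal.Tendsto.mul_const (b := ‖g1 hF hM ξ‖ₑ ^ 2) ht (Or.inl one_ne_zero)
    rwa [one_mul] at this
  rw [h1]
  refine (lintegral_liminf_le hfm).trans ?_
  refine Filter.liminf_le_of_le (by isBoundedDefault) ?_
  intro b hb
  obtain ⟨n, hn⟩ := hb.exists
  exact hn.trans (g1_lint hF hM (Lambda3_smul pe0_mem (by positivity)))

theorem integrable_exp_norm {c : ℝ} (hc : 0 < c) : Integrable (fun ξ : E3 => Real.exp (-(c * ‖ξ‖))) := by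
  have h := (integrable_one_add_norm (E := E3) (μ := volume) (r := 4) (by simp; norm_num)).const_mul ((1 + 2 / (c / 4)) ^ 4)
  refine h.mono' (by fun_prop) (Filter.Eventually.of_forall fun ξ => ?_)
  rw [Real.norm_of_nonneg (Real.exp_pos _).le]
  have h1 := poly_exp_bound (c := c / 4) (by positivity) (norm_nonneg ξ)
  have h2 : Real.exp (-(c / 4 / 2 * ‖ξ‖)) ≤ 1 := by
    apply Real.exp_le_one_iff.2
    have : 0 ≤ c / 4 / 2 * ‖ξ‖ := by positivity
    linarith
  have h3 : (1 + ‖ξ‖) * Real.exp (-(c / 4 * ‖ξ‖)) ≤ 1 + 2 / (c / 4) := by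
    refine h1.trans ?_
    exact mul_le_of_le_one_right (by positivity) h2
  have h4 := pow_le_pow_left₀ (by positivity) h3 4
  rw [mul_pow, ← Real.exp_nat_mul] at h4
  have h5 : ((4 : ℕ) : ℝ) * (-(c / 4 * ‖ξ‖)) = -(c * ‖ξ‖) := by push_cast; ring
  rw [h5] at h4
  rw [Real.rpow_neg (by positivity), ← div_eq_mul_inv, le_div_iff₀ (by positivity)]
  have h6 : (1 + ‖ξ‖) ^ (4 : ℝ) = (1 + ‖ξ‖) ^ 4 := by norm_cast
  rw [h6]
  linarith

theorem g0_memLp : MemLp (g0 hF hM) 2 volume :=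
  aux_memLp_two _ (g0_meas hF hM).aestronglyMeasurable ((g0_lint hF hM).trans_lt hM)

theorem g0_InK : InK (g0 hF hM) where
  meas := g0_meas hF hM
  supp ξ hξ := by simp [g0, hξ]
  int c hc := by
    refine MemLp.integrable_mul (p := 2) (q := 2) (g0_memLp hF hM).norm ?_
    rw [memLp_two_iff_integrable_sq (by fun_prop)]
    refine (integrable_exp_norm (c := 2 * c) (by positivity)).congr (Filter.Eventually.of_forall fun ξ => ?_)
    dsimp only
    rw [← Real.exp_nat_mul]; congr 1; push_cast; ring

theorem inversion {y : Fin 3 → ℝ} (hy : y ∈ Lambda3) (x : E3) : slice F y x = Phi (g0 hF hM) (tpt x.ofLp y) := by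
  set w : E3 → ℂ := fun ξ => Real.exp (-(2 * Real.pi * rdot y ξ)) • g0 hF hM ξ with hw
  have hae : (gh hF hM hy : E3 → ℂ) =ᵐ[volume] w := by
    filter_upwards [gh_eq hF hM hy, g0_ae hF hM] with ξ h1 h2
    rw [h1, hw]; simp only [h2]
  have hw2 : MemLp w 2 volume := (Lp.memLp (gh hF hM hy)).ae_eq hae
  have hw1 : Integrable w := by
    have h1 := (g0_InK hF hM).box_int (tpt_mem (x := 0) hy)
    refine (integrable_norm_iff hw2.1).1 (h1.norm.congr (Filter.Eventually.of_forall fun ξ => ?_))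
    dsimp only
    rw [norm_mul, norm_exp_zdot, tpt_im, hw]
    simp only
    rw [norm_smul, Real.norm_of_nonneg (Real.exp_pos _).le, mul_comm]
  have hlp : gh hF hM hy = hw2.toLp w := by
    apply Lp.ext
    exact hae.trans hw2.coeFn_toLp.symm
  have h1 : (slice_memLp hF hM hy).toLp _ = (𝓕⁻ (hw2.toLp w) : Lp (α := E3) ℂ 2 volume) := by
    rw [← hlp, gh]; simp
  have h2 : slice F y =ᵐ[volume] (𝓕⁻ w : E3 → ℂ) := by
    refine (slice_memLp hF hM hy).coeFn_toLp.symm.trans ?_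
    rw [h1]
    exact aux_fourierInv_ae w hw1 hw2
  have h3 : slice F y = (𝓕⁻ w : E3 → ℂ) :=
    Measure.eq_of_ae_eq h2 (slice_cont hF hy) (aux_fourierInv_continuous w hw1)
  rw [h3, Real.fourierInv_eq', Phi]
  congr 1
  funext ξ
  rw [hw, smul_eq_mul, mul_comm]
  simp only
  rw [← Complex.coe_smul, smul_eq_mul, mul_comm _ (g0 hF hM ξ), mul_assoc, Complex.ofReal_exp, ← Complex.exp_add]
  congr 2
  have : (inner ℝ ξ x : ℝ) = rdot x.ofLp ξ := by
    simp [PiLp.inner_apply, Fin.sum_univ_three, rdot]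
  rw [this]
  simp only [rdot, zdot, tpt]
  push_cast
  linear_combination (-2 * Real.pi * ((y 0 : ℂ) * ξ 0 + y 1 * ξ 1 + y 2 * ξ 2)) * Complex.I_sq

end

theorem paley_wiener {F : (Fin 3 → ℂ) → ℂ} (hF : DifferentiableOn ℂ F TLambda3) (hM : hardyNormSq F < ⊤) :
    ∃ g : E3 → ℂ, InK g ∧ ∫⁻ ξ, ‖g ξ‖ₑ ^ 2 ≤ hardyNormSq F ∧ ∀ z ∈ TLambda3, F z = Phi g z := by
  refine ⟨g0 hF hM, g0_InK hF hM, g0_lint hF hM, fun z hz => ?_⟩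
  have h := inversion hF hM (y := fun i => (z i).im) hz (WithLp.toLp 2 (fun i => (z i).re))
  have e : tpt (fun i => (z i).re) (fun i => (z i).im) = z := by
    funext i; simp [tpt, Complex.re_add_im]
  simpa only [slice, e] using h

end PaleyWiener2


section FinalEstimate
open FourierTransform

/-- splitting off the first coordinate -/
def e3 : E3 ≃ᵐ ℝ × (ℝ × ℝ) :=
  (MeasurableEquiv.toLp 2 (Fin 3 → ℝ)).symm.trans
    ((MeasurableEquiv.piFinSuccAbove (fun _ : Fin 3 => ℝ) 0).trans
      (MeasurableEquiv.prodCongr (MeasurableEquiv.refl ℝ) MeasurableEquiv.finTwoArrow))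

theorem e3_mp : MeasurePreserving e3 volume volume := by
  have h1 := PiLp.volume_preserving_ofLp (Fin 3)
  have h2 := volume_preserving_piFinSuccAbove (fun _ : Fin 3 => ℝ) 0
  have h3 := (MeasurePreserving.id (volume : Measure ℝ)).prod (volume_preserving_finTwoArrow ℝ)
  exact (h3.comp h2).comp h1

/-- the inverse of `e3` -/
def mk3 (t : ℝ) (p : ℝ × ℝ) : E3 := e3.symm (t, p)

theorem e3_apply (ξ : E3) : e3 ξ = (ξ 0, (ξ 1, ξ 2)) := rfl

theorem e3_mk3 (t : ℝ) (p : ℝ × ℝ) : e3 (mk3 t p) = (t, p) := e3.apply_symm_apply _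

theorem mk3_0 (t : ℝ) (p : ℝ × ℝ) : mk3 t p 0 = t := by
  have := e3_mk3 t p
  rw [e3_apply] at this
  exact congrArg (fun q => q.1) this

theorem mk3_1 (t : ℝ) (p : ℝ × ℝ) : mk3 t p 1 = p.1 := by
  have := e3_mk3 t p
  rw [e3_apply] at this
  exact congrArg (fun q => q.2.1) this

theorem mk3_2 (t : ℝ) (p : ℝ × ℝ) : mk3 t p 2 = p.2 := by
  have := e3_mk3 t p
  rw [e3_apply] at this
  exact congrArg (fun q => q.2.2) this

theorem mk3_meas : Measurable (fun q : ℝ × (ℝ × ℝ) => mk3 q.1 q.2) := e3.symm.measurable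

theorem lint_mk3 (f : E3 → ℝ≥0∞) (hf : Measurable f) : ∫⁻ ξ, f ξ = ∫⁻ t : ℝ, ∫⁻ p : ℝ × ℝ, f (mk3 t p) := by
  have h := e3_mp.symm.lintegral_comp_emb e3.symm.measurableEmbedding f
  rw [← h, Measure.volume_eq_prod, lintegral_prod _ (by exact (hf.comp mk3_meas).aemeasurable)]
  rfl

theorem int_mk3 (f : E3 → ℂ) (hf : Integrable f) :
    Integrable (fun t : ℝ => ∫ p : ℝ × ℝ, f (mk3 t p)) ∧ ∫ ξ, f ξ = ∫ t : ℝ, ∫ p : ℝ × ℝ, f (mk3 t p) := by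
  have h := e3_mp.symm.integral_comp e3.symm.measurableEmbedding f
  have hi : Integrable (fun q : ℝ × (ℝ × ℝ) => f (mk3 q.1 q.2)) (volume.prod volume) := 
    (e3_mp.symm.integrable_comp_emb e3.symm.measurableEmbedding).2 hf
  refine ⟨hi.integral_prod_left, ?_⟩
  rw [← h, Measure.volume_eq_prod]
  exact integral_prod _ hi

theorem plancherel_le (w : ℝ → ℂ) (hw : Integrable w) : ∫⁻ x, ‖(𝓕⁻ w : ℝ → ℂ) x‖ₑ ^ 2 ≤ ∫⁻ t, ‖w t‖ₑ ^ 2 := by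
  by_cases h : ∫⁻ t, ‖w t‖ₑ ^ 2 < ⊤
  · exact (aux_plancherelInv w hw (aux_memLp_two w hw.1 h)).le
  · rw [not_lt, top_le_iff] at h
    rw [h]; exact le_top

theorem cs_sq {α : Type*} [MeasurableSpace α] {μ : Measure α} {f g : α → ℝ≥0∞} (hf : AEMeasurable f μ) (hg : AEMeasurable g μ) :
    (∫⁻ a, f a * g a ∂μ) ^ 2 ≤ (∫⁻ a, f a ^ 2 ∂μ) * ∫⁻ a, g a ^ 2 ∂μ := by
  have h := ENNReal.lintegral_mul_le_Lp_mul_Lq μ (p := 2) (q := 2) ⟨by norm_num, by norm_num, by norm_num⟩ hf hg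
  calc (∫⁻ a, f a * g a ∂μ) ^ 2 ≤ ((∫⁻ a, f a ^ (2 : ℝ) ∂μ) ^ (1 / 2 : ℝ) * (∫⁻ a, g a ^ (2 : ℝ) ∂μ) ^ (1 / 2 : ℝ)) ^ 2 := by
        gcongr; exact h
    _ = _ := by
        rw [mul_pow, ← ENNReal.rpow_natCast, ← ENNReal.rpow_natCast, ← ENNReal.rpow_mul, ← ENNReal.rpow_mul]
        norm_num

theorem radial_int (m : ℕ) {t : ℝ} (ht : 0 < t) :
    ∫⁻ r in Ioi (0 : ℝ), ENNReal.ofReal r * ENNReal.ofReal (if r ≤ t then (t ^ 2 - r ^ 2) ^ (2 * m) else 0)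
      = ENNReal.ofReal (t ^ (4 * m + 2) / (2 * (2 * m + 1))) := by
  have h1 : ∫⁻ r in Ioi (0 : ℝ), ENNReal.ofReal r * ENNReal.ofReal (if r ≤ t then (t ^ 2 - r ^ 2) ^ (2 * m) else 0)
     = ∫⁻ r in Ioc 0 t, ENNReal.ofReal (r * (t ^ 2 - r ^ 2) ^ (2 * m)) := by
    rw [← lintegral_indicator measurableSet_Ioi, ← lintegral_indicator measurableSet_Ioc]
    congr 1
    funext r
    by_cases hr : 0 < r
    · by_cases hrt : r ≤ t
      · simp [hr, hrt, ENNReal.ofReal_mul hr.le]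
      · simp [hr, hrt]
    · simp [hr]
  rw [h1, ← ofReal_integral_eq_lintegral_ofReal]
  · congr 1
    rw [← intervalIntegral.integral_of_le ht.le]
    have hd : ∀ r ∈ uIcc 0 t, HasDerivAt (fun r => -(t ^ 2 - r ^ 2) ^ (2 * m + 1) / (2 * (2 * m + 1))) (r * (t ^ 2 - r ^ 2) ^ (2 * m)) r := by
      intro r _
      have h2 : HasDerivAt (fun r : ℝ => t ^ 2 - r ^ 2) (-(2 * r)) r := by
        simpa using (hasDerivAt_pow 2 r).const_sub (t ^ 2)
      have h3 := ((h2.pow (2 * m + 1)).neg).div_const (2 * (2 * (m : ℝ) + 1))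
      refine h3.congr_deriv ?_
      have : (2 * (m : ℝ) + 1) ≠ 0 := by positivity
      simp only [Nat.add_sub_cancel]
      push_cast
      field_simp
    rw [intervalIntegral.integral_eq_sub_of_hasDerivAt hd (Continuous.intervalIntegrable (by fun_prop) _ _)]
    have : (2 * (m : ℝ) + 1) ≠ 0 := by positivity
    simp
    rw [← pow_mul]
    ring
  · apply Continuous.integrableOn_Ioc; fun_prop
  · refine (ae_restrict_iff' measurableSet_Ioc).2 (Filter.Eventually.of_forall fun r hr => ?_)
    have : 0 ≤ (t ^ 2 - r ^ 2) ^ (2 * m) := by rw [pow_mul]; positivity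
    exact mul_nonneg hr.1.le this

theorem ball_int (m : ℕ) {t : ℝ} (ht : 0 < t) :
    ∫⁻ p : ℝ × ℝ, ENNReal.ofReal (if p.1 ^ 2 + p.2 ^ 2 ≤ t ^ 2 then (t ^ 2 - (p.1 ^ 2 + p.2 ^ 2)) ^ (2 * m) else 0)
      = ENNReal.ofReal (Real.pi * t ^ (4 * m + 2) / (2 * m + 1)) := by
  rw [← lintegral_comp_polarCoord_symm, polarCoord_target]
  have h1 : ∀ p ∈ Ioi (0 : ℝ) ×ˢ Ioo (-Real.pi) Real.pi, ENNReal.ofReal p.1 • ENNReal.ofReal (if (polarCoord.symm p).1 ^ 2 + (polarCoord.symm p).2 ^ 2 ≤ t ^ 2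
      then (t ^ 2 - ((polarCoord.symm p).1 ^ 2 + (polarCoord.symm p).2 ^ 2)) ^ (2 * m) else 0)
      = ENNReal.ofReal p.1 * ENNReal.ofReal (if p.1 ≤ t then (t ^ 2 - p.1 ^ 2) ^ (2 * m) else 0) := by
    intro p hp
    have hp0 : 0 < p.1 := hp.1
    have e : (polarCoord.symm p).1 ^ 2 + (polarCoord.symm p).2 ^ 2 = p.1 ^ 2 := by
      simp only [polarCoord_symm_apply]
      linear_combination p.1 ^ 2 * Real.sin_sq_add_cos_sq p.2
    rw [e, smul_eq_mul]
    simp only [pow_le_pow_iff_left₀ hp0.le ht.le two_ne_zero]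
  rw [setLIntegral_congr_fun (measurableSet_Ioi.prod measurableSet_Ioo) h1]
  have hm : Measurable (fun r : ℝ => ENNReal.ofReal r * ENNReal.ofReal (if r ≤ t then (t ^ 2 - r ^ 2) ^ (2 * m) else 0)) := by
    apply ENNReal.measurable_ofReal.mul
    apply ENNReal.measurable_ofReal.comp
    exact Measurable.ite (measurableSet_le measurable_id measurable_const) (by fun_prop) measurable_const
  rw [Measure.volume_eq_prod, ← Measure.prod_restrict, lintegral_prod _ (by exact (hm.comp measurable_fst).aemeasurable)]
  simp only [lintegral_const, MeasurableSet.univ, Measure.restrict_apply, univ_inter, Real.volume_Ioo]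
  rw [lintegral_mul_const _ hm, radial_int m ht, ← ENNReal.ofReal_mul (by positivity)]
  congr 1
  have : (2 * (m : ℝ) + 1) ≠ 0 := by positivity
  field_simp
  ring

theorem gamma_int (m : ℕ) {t : ℝ} (ht : 0 < t) :
    ∫⁻ y in Ioi (0 : ℝ), ENNReal.ofReal (y ^ ((4 * m + 1 : ℝ))) * ENNReal.ofReal (Real.exp (-(4 * Real.pi * y * t)))
      = ENNReal.ofReal (Real.Gamma (4 * m + 2) / (4 * Real.pi * t) ^ (4 * m + 2)) := by
  have hr : 0 < 4 * Real.pi * t := by positivity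
  have key := Real.integral_rpow_mul_exp_neg_mul_Ioi (a := 4 * m + 2) (r := 4 * Real.pi * t) (by positivity) hr
  have e : (4 * (m : ℝ) + 2 - 1) = 4 * m + 1 := by ring
  rw [e] at key
  have e2 : (1 / (4 * Real.pi * t)) ^ (4 * (m : ℝ) + 2) * Real.Gamma (4 * m + 2) = Real.Gamma (4 * m + 2) / (4 * Real.pi * t) ^ (4 * m + 2) := by
    have : (4 * (m : ℝ) + 2) = ((4 * m + 2 : ℕ) : ℝ) := by push_cast; ring
    rw [show (1 / (4 * Real.pi * t)) ^ (4 * (m : ℝ) + 2) = (1 / (4 * Real.pi * t)) ^ (4 * m + 2) by rw [this, Real.rpow_natCast]]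
    rw [div_pow, one_pow]; ring
  rw [e2] at key
  have hpos : 0 < Real.Gamma (4 * m + 2) / (4 * Real.pi * t) ^ (4 * m + 2) := by
    have := Real.Gamma_pos_of_pos (s := 4 * m + 2) (by positivity)
    positivity
  have hgint : Integrable (fun y : ℝ => y ^ ((4 * m + 1 : ℝ)) * Real.exp (-(4 * Real.pi * t * y))) (volume.restrict (Ioi 0)) := by
    by_contra hc
    rw [integral_undef hc] at key
    linarith
  rw [← key, ofReal_integral_eq_lintegral_ofReal hgint]
  · apply setLIntegral_congr_fun measurableSet_Ioi
    intro y hy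
    dsimp only
    rw [← ENNReal.ofReal_mul (Real.rpow_nonneg (le_of_lt hy) _)]
    congr 3
    ring
  · refine (ae_restrict_iff' measurableSet_Ioi).2 (Filter.Eventually.of_forall fun r hr => ?_)
    exact mul_nonneg (Real.rpow_nonneg (le_of_lt hr) _) (Real.exp_pos _).le

theorem berg_le (α : ℝ) (G : ℂ → ℂ) : bergNormSqUHP α G ≤
    ∫⁻ y in Ioi (0 : ℝ), ENNReal.ofReal (y ^ α) * ∫⁻ x : ℝ, ‖G (⟨x, y⟩ : ℂ)‖ₑ ^ 2 := by
  unfold bergNormSqUHP Vm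
  have hU : MeasurableSet UHP := measurableSet_lt measurable_const Complex.measurable_im
  refine (lintegral_withDensity_le_lintegral_mul _ (by fun_prop) _).trans ?_
  rw [← lintegral_indicator hU]
  rw [← Complex.volume_preserving_equiv_real_prod.symm.lintegral_comp_emb Complex.measurableEquivRealProd.symm.measurableEmbedding]
  rw [Measure.volume_eq_prod, ← lintegral_prod_swap]
  refine (lintegral_prod_le _).trans ?_
  rw [← lintegral_indicator measurableSet_Ioi]
  apply lintegral_mono
  intro y
  dsimp only
  by_cases hy : 0 < y
  · rw [indicator_of_mem (show y ∈ Ioi (0 : ℝ) from hy), ← lintegral_const_mul' _ _ ENNReal.ofReal_ne_top]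
    apply lintegral_mono
    intro x
    have hm : (⟨x, y⟩ : ℂ) ∈ UHP := hy
    simp only [Prod.swap_prod_mk, Complex.measurableEquivRealProd_symm_apply]
    rw [indicator_of_mem hm]
    exact le_rfl
  · have : ∀ x : ℝ, (⟨x, y⟩ : ℂ) ∉ UHP := fun x => hy
    simp [this]

end FinalEstimate


section FinalEstimate2
open FourierTransform

theorem line_mem {z : ℂ} (hz : z ∈ UHP) : ![z, 0, 0] ∈ TLambda3 := by
  show (fun i => (![z, 0, 0] i).im) ∈ Lambda3
  rw [Lambda3_iff]
  have : 0 < z.im := hz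
  simp [this]

theorem zdot_line (z : ℂ) (ξ : E3) : zdot ![z, 0, 0] ξ = z * (ξ 0 : ℂ) := by simp [zdot]

/-- marginal of the spectral density -/
def marg (k : E3 → ℂ) (t : ℝ) : ℂ := ∫ p : ℝ × ℝ, k (mk3 t p)

theorem line_formula {k : E3 → ℂ} (hk : InK k) {z : ℂ} (hz : z ∈ UHP) :
    Integrable (fun t : ℝ => marg k t * Complex.exp (2 * Real.pi * Complex.I * (z * (t : ℂ)))) ∧
    Phi k ![z, 0, 0] = ∫ t : ℝ, marg k t * Complex.exp (2 * Real.pi * Complex.I * (z * (t : ℂ))) := by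
  have h := int_mk3 _ (hk.box_int (line_mem hz))
  have e : ∀ t : ℝ, ∫ p : ℝ × ℝ, k (mk3 t p) * Complex.exp (2 * Real.pi * Complex.I * zdot ![z, 0, 0] (mk3 t p))
     = marg k t * Complex.exp (2 * Real.pi * Complex.I * (z * (t : ℂ))) := by
    intro t
    simp only [zdot_line, mk3_0]
    rw [integral_mul_const]; rfl
  simp only [e] at h
  exact h

theorem line_plancherel {k : E3 → ℂ} (hk : InK k) {y : ℝ} (hy : 0 < y) :
    ∫⁻ x : ℝ, ‖Phi k ![(⟨x, y⟩ : ℂ), 0, 0]‖ₑ ^ 2 ≤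
      ∫⁻ t : ℝ, ‖marg k t‖ₑ ^ 2 * ENNReal.ofReal (Real.exp (-(4 * Real.pi * y * t))) := by
  set w : ℝ → ℂ := fun t => marg k t * Complex.exp (2 * Real.pi * Complex.I * ((⟨0, y⟩ : ℂ) * (t : ℂ))) with hw
  have hwi : Integrable w := (line_formula hk (z := ⟨0, y⟩) hy).1
  have h1 : ∀ x : ℝ, Phi k ![(⟨x, y⟩ : ℂ), 0, 0] = (𝓕⁻ w : ℝ → ℂ) x := by
    intro x
    rw [(line_formula hk (z := ⟨x, y⟩) hy).2, Real.fourierInv_eq']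
    congr 1
    funext t
    rw [hw, smul_eq_mul]
    simp only
    rw [mul_left_comm (Complex.exp _) (marg k t), ← Complex.exp_add]
    congr 2
    have e1 : (⟨x, y⟩ : ℂ) = x + (⟨0, y⟩ : ℂ) := by
      apply Complex.ext <;> simp
    rw [e1]
    have e2 : (inner ℝ t x : ℝ) = t * x := by simp [mul_comm]
    rw [e2]
    push_cast
    ring
  simp only [h1]
  refine (plancherel_le w hwi).trans (le_of_eq ?_)
  apply lintegral_congr
  intro t
  rw [hw, enorm_mul, mul_pow]
  congr 1
  rw [← ofReal_norm, Complex.norm_exp, ← ENNReal.ofReal_pow (Real.exp_pos _).le, ← Real.exp_nat_mul]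
  congr 2
  simp
  ring

theorem marg_neg {k : E3 → ℂ} (hk : InK k) {t : ℝ} (ht : t < 0) : marg k t = 0 := by
  unfold marg
  have : ∀ p : ℝ × ℝ, k (mk3 t p) = 0 := by
    intro p
    apply hk.supp
    intro h
    have := h.1
    rw [mk3_0] at this
    linarith
  simp [this]

theorem marg_bound {g : E3 → ℂ} (hg : InK g) (m : ℕ) {t : ℝ} (ht : 0 < t) :
    ‖marg (fun ξ => (((4 * Real.pi ^ 2 * dl ξ) ^ m : ℝ) : ℂ) * g ξ) t‖ₑ ^ 2 ≤
      ENNReal.ofReal ((4 * Real.pi ^ 2) ^ (2 * m) * (Real.pi * t ^ (4 * m + 2) / (2 * m + 1))) *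
        ∫⁻ p : ℝ × ℝ, ‖g (mk3 t p)‖ₑ ^ 2 := by
  set φ : ℝ × ℝ → ℝ := fun p => if p.1 ^ 2 + p.2 ^ 2 ≤ t ^ 2 then (t ^ 2 - (p.1 ^ 2 + p.2 ^ 2)) ^ m else 0 with hφ
  have hφm : Measurable φ := by
    apply Measurable.ite _ (by fun_prop) measurable_const
    exact measurableSet_le (by fun_prop) measurable_const
  have hgm : Measurable (fun p : ℝ × ℝ => g (mk3 t p)) := hg.meas.comp (mk3_meas.comp (by fun_prop : Measurable (fun p : ℝ × ℝ => (t, p))))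
  have e : ∀ p : ℝ × ℝ, (((4 * Real.pi ^ 2 * dl (mk3 t p)) ^ m : ℝ) : ℂ) * g (mk3 t p)
      = (((4 * Real.pi ^ 2) ^ m : ℝ) : ℂ) * ((φ p : ℂ) * g (mk3 t p)) := by
    intro p
    have hdl : dl (mk3 t p) = t ^ 2 - (p.1 ^ 2 + p.2 ^ 2) := by
      simp only [dl, mk3_0, mk3_1, mk3_2]; ring
    by_cases hp : p.1 ^ 2 + p.2 ^ 2 ≤ t ^ 2
    · simp only [hφ, hp, if_true]
      rw [hdl, mul_pow]; push_cast; ring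
    · have : g (mk3 t p) = 0 := by
        apply hg.supp
        intro h
        have := h.2
        rw [mk3_0, mk3_1, mk3_2] at this
        exact hp this
      simp [this]
  have h1 : ‖marg (fun ξ => (((4 * Real.pi ^ 2 * dl ξ) ^ m : ℝ) : ℂ) * g ξ) t‖ₑ ≤
     ENNReal.ofReal ((4 * Real.pi ^ 2) ^ m) * ∫⁻ p : ℝ × ℝ, ‖φ p‖ₑ * ‖g (mk3 t p)‖ₑ := by
    unfold marg
    simp only [e]
    rw [integral_const_mul, enorm_mul]
    have e2 : ‖(((4 * Real.pi ^ 2) ^ m : ℝ) : ℂ)‖ₑ = ENNReal.ofReal ((4 * Real.pi ^ 2) ^ m) := by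
      rw [← ofReal_norm, Complex.norm_real, Real.norm_of_nonneg (by positivity)]
    rw [e2]
    gcongr
    refine (enorm_integral_le_lintegral_enorm _).trans (le_of_eq ?_)
    apply lintegral_congr
    intro p
    rw [enorm_mul, ← ofReal_norm, Complex.norm_real, ofReal_norm]
  calc _ ≤ (ENNReal.ofReal ((4 * Real.pi ^ 2) ^ m) * ∫⁻ p : ℝ × ℝ, ‖φ p‖ₑ * ‖g (mk3 t p)‖ₑ) ^ 2 := by gcongr
    _ ≤ ENNReal.ofReal ((4 * Real.pi ^ 2) ^ (2 * m)) * ((∫⁻ p : ℝ × ℝ, ‖φ p‖ₑ ^ 2) * ∫⁻ p : ℝ × ℝ, ‖g (mk3 t p)‖ₑ ^ 2) := by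
        rw [mul_pow, ← ENNReal.ofReal_pow (by positivity), ← pow_mul, mul_comm m 2]
        gcongr
        exact cs_sq (by fun_prop) hgm.enorm.aemeasurable
    _ = _ := by
        have e3 : ∫⁻ p : ℝ × ℝ, ‖φ p‖ₑ ^ 2 = ENNReal.ofReal (Real.pi * t ^ (4 * m + 2) / (2 * m + 1)) := by
          rw [← ball_int m ht]
          apply lintegral_congr
          intro p
          rw [← ofReal_norm, ← ENNReal.ofReal_pow (norm_nonneg _), Real.norm_eq_abs, sq_abs]
          congr 1
          simp only [hφ]
          split_ifs
          · rw [← pow_mul, mul_comm m 2]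
          · simp
        rw [e3, ENNReal.ofReal_mul (by positivity), mul_assoc]

theorem marg_meas {k : E3 → ℂ} (hk : InK k) : AEStronglyMeasurable (marg k) := by
  have : StronglyMeasurable (fun q : ℝ × (ℝ × ℝ) => k (mk3 q.1 q.2)) := (hk.meas.comp mk3_meas).stronglyMeasurable
  exact this.integral_prod_right.aestronglyMeasurable

theorem const_id (m : ℕ) {t : ℝ} (ht : 0 < t) :
    ((4 * Real.pi ^ 2) ^ (2 * m) * (Real.pi * t ^ (4 * m + 2) / (2 * m + 1))) * (Real.Gamma (4 * m + 2) / (4 * Real.pi * t) ^ (4 * m + 2))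
     = Real.Gamma (4 * m + 2) / (2 ^ (4 * m + 4) * Real.pi * (2 * m + 1)) := by
  have h1 : (2 * (m : ℝ) + 1) ≠ 0 := by positivity
  have hp := Real.pi_pos.ne'
  have e1 : (4 * Real.pi ^ 2) ^ (2 * m) = 4 ^ (2 * m) * Real.pi ^ (4 * m) := by
    rw [mul_pow, ← pow_mul]; congr 2; ring
  have e2 : (4 * Real.pi * t) ^ (4 * m + 2) = 4 ^ (2 * m) * 2 ^ (4 * m + 4) * (Real.pi ^ (4 * m) * Real.pi ^ 2) * t ^ (4 * m + 2) := by
    rw [mul_pow, mul_pow, pow_add Real.pi]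
    have : (4 : ℝ) ^ (4 * m + 2) = 4 ^ (2 * m) * 2 ^ (4 * m + 4) := by
      have h4 : (4 : ℝ) = 2 ^ 2 := by norm_num
      rw [h4, ← pow_mul, ← pow_mul, ← pow_add]; congr 1; ring
    rw [this]
  rw [e1, e2]
  field_simp

theorem final_bound {g : E3 → ℂ} (hg : InK g) (m : ℕ) (hk : InK (fun ξ => (((4 * Real.pi ^ 2 * dl ξ) ^ m : ℝ) : ℂ) * g ξ)) :
    ∫⁻ y in Ioi (0 : ℝ), ENNReal.ofReal (y ^ ((4 * m + 1 : ℝ))) *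
      ∫⁻ x : ℝ, ‖Phi (fun ξ => (((4 * Real.pi ^ 2 * dl ξ) ^ m : ℝ) : ℂ) * g ξ) ![(⟨x, y⟩ : ℂ), 0, 0]‖ₑ ^ 2
    ≤ ENNReal.ofReal (Real.Gamma (4 * m + 2) / (2 ^ (4 * m + 4) * Real.pi * (2 * m + 1))) * ∫⁻ ξ, ‖g ξ‖ₑ ^ 2 := by
  set k : E3 → ℂ := fun ξ => (((4 * Real.pi ^ 2 * dl ξ) ^ m : ℝ) : ℂ) * g ξ with hkdef
  have hmm : AEMeasurable (fun t => ‖marg k t‖ₑ ^ 2) := ((marg_meas hk).enorm).pow_const 2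
  calc _ ≤ ∫⁻ y in Ioi (0 : ℝ), ∫⁻ t : ℝ, ENNReal.ofReal (y ^ ((4 * m + 1 : ℝ))) *
        (‖marg k t‖ₑ ^ 2 * ENNReal.ofReal (Real.exp (-(4 * Real.pi * y * t)))) := by
        apply setLIntegral_mono' measurableSet_Ioi
        intro y hy
        rw [lintegral_const_mul' _ _ ENNReal.ofReal_ne_top]
        exact mul_le_mul_right (line_plancherel hk hy) _
    _ = ∫⁻ t : ℝ, ∫⁻ y in Ioi (0 : ℝ), ENNReal.ofReal (y ^ ((4 * m + 1 : ℝ))) *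
        (‖marg k t‖ₑ ^ 2 * ENNReal.ofReal (Real.exp (-(4 * Real.pi * y * t)))) := by
        apply lintegral_lintegral_swap
        have h1 : AEMeasurable (fun q : ℝ × ℝ => ‖marg k q.2‖ₑ ^ 2) ((volume.restrict (Ioi (0:ℝ))).prod volume) := hmm.comp_snd
        have h2 : Measurable (fun q : ℝ × ℝ => ENNReal.ofReal (q.1 ^ ((4 * m + 1 : ℝ)))) := by fun_prop
        have h3 : Measurable (fun q : ℝ × ℝ => ENNReal.ofReal (Real.exp (-(4 * Real.pi * q.1 * q.2)))) := by fun_prop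
        exact h2.aemeasurable.mul (h1.mul h3.aemeasurable)
    _ ≤ ∫⁻ t : ℝ, ENNReal.ofReal (Real.Gamma (4 * m + 2) / (2 ^ (4 * m + 4) * Real.pi * (2 * m + 1))) * ∫⁻ p : ℝ × ℝ, ‖g (mk3 t p)‖ₑ ^ 2 := by
        apply lintegral_mono_ae
        have h0 : ∀ᵐ t : ℝ, t ≠ 0 := by
          simp [ae_iff]
        filter_upwards [h0] with t ht0
        rcases lt_or_gt_of_ne ht0 with ht | ht
        · simp [marg_neg hk ht]
        · have e : ∀ y : ℝ, ENNReal.ofReal (y ^ ((4 * m + 1 : ℝ))) * (‖marg k t‖ₑ ^ 2 * ENNReal.ofReal (Real.exp (-(4 * Real.pi * y * t))))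
             = ‖marg k t‖ₑ ^ 2 * (ENNReal.ofReal (y ^ ((4 * m + 1 : ℝ))) * ENNReal.ofReal (Real.exp (-(4 * Real.pi * y * t)))) := by
            intro y; ring
          simp only [e]
          rw [lintegral_const_mul _ (by fun_prop), gamma_int m ht]
          have hb := marg_bound hg m ht
          calc _ ≤ (ENNReal.ofReal ((4 * Real.pi ^ 2) ^ (2 * m) * (Real.pi * t ^ (4 * m + 2) / (2 * m + 1))) *
              ∫⁻ p : ℝ × ℝ, ‖g (mk3 t p)‖ₑ ^ 2) * ENNReal.ofReal (Real.Gamma (4 * m + 2) / (4 * Real.pi * t) ^ (4 * m + 2)) := by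
                gcongr
            _ = _ := by
                rw [← const_id m ht, ENNReal.ofReal_mul (p := (4 * Real.pi ^ 2) ^ (2 * m) * (Real.pi * t ^ (4 * m + 2) / (2 * m + 1))) (by positivity)]
                ring
    _ = _ := by
        have hgm := hg.meas
        rw [lintegral_const_mul' _ _ ENNReal.ofReal_ne_top, lint_mk3 _ (by fun_prop)]

end FinalEstimate2

/-- with `C_m = Γ(4m+2)/(2^{4m+4} π (2m+1))`, the restriction
`z₁ ↦ (□^m F)(z₁,0,0)` of `□^m F` to `Π⁺` belongs to `A²_{4m+1}(Π⁺)` with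
`‖R□^m F‖²_{A²_{4m+1}} ≤ C_m ‖F‖²_{H²(T_{Λ₃})}` for every `F ∈ H²(T_{Λ₃})`. -/
theorem restriction_bounded_into_bergman (m : ℕ) :
    ∀ F : (Fin 3 → ℂ) → ℂ, DifferentiableOn ℂ F TLambda3 → hardyNormSq F < ⊤ →
      DifferentiableOn ℂ (fun z₁ : ℂ => Box^[m] F ![z₁, 0, 0]) UHP ∧
      bergNormSqUHP (4 * m + 1) (fun z₁ : ℂ => Box^[m] F ![z₁, 0, 0]) ≤
        ENNReal.ofReal
            (Real.Gamma (4 * m + 2) / (2 ^ (4 * m + 4) * Real.pi * (2 * m + 1)))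
          * hardyNormSq F := by
  intro F hF hM
  obtain ⟨g, hg, hgM, hFg⟩ := paley_wiener hF hM
  obtain ⟨hk, hbox⟩ := box_iter hg hFg m
  constructor
  · have h1 : DifferentiableOn ℂ (fun z₁ : ℂ => Phi (fun ξ => (((4 * Real.pi ^ 2 * dl ξ) ^ m : ℝ) : ℂ) * g ξ) ![z₁, 0, 0]) UHP := by
      intro z hz
      apply DifferentiableAt.differentiableWithinAt
      have h2 : DifferentiableAt ℂ (fun z₁ : ℂ => (![z₁, 0, 0] : Fin 3 → ℂ)) z := by
        rw [differentiableAt_pi]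
        intro i
        fin_cases i <;> simp
      exact DifferentiableAt.comp (g := Phi (fun ξ => (((4 * Real.pi ^ 2 * dl ξ) ^ m : ℝ) : ℂ) * g ξ)) z (hk.phi (line_mem hz)).1 h2
    exact h1.congr fun z hz => hbox _ (line_mem hz)
  · refine (berg_le _ _).trans ?_
    refine le_trans ?_ (mul_le_mul_right hgM _)
    refine le_trans (le_of_eq ?_) (final_bound hg m hk)
    apply setLIntegral_congr_fun measurableSet_Ioi
    intro y hy
    dsimp only
    congr 1
    apply lintegral_congr
    intro x
    rw [hbox _ (line_mem (z := ⟨x, y⟩) hy)]
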